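/- arXiv:1106.0928 — 3 statements merged into one kernel-verified Lean document; each statement's English description precedes it below -/
import Mathlib

section
/- For every ℝ-linear connection ∇ of L on E and every End_C(E)-valued ℝ-linear n-form ω on L, one has d_ρ(Tr_* ω) = Tr_*(d^{∇̄} ω); that is, d_ρ ∘ Tr_* = Tr_* ∘ d^{∇̄}. -/
open Module

/-- The trace over `C` of an `ℝ`-linear endomorphism of `E` whose underlying
function happens to be `C`-linear (and `0` otherwise). -/
noncomputable def trR (C : Type*) {E : Type*} [CommRing C] [AddCommGroup E]
    [Module ℝ E] [Module C E] (e : E →ₗ[ℝ] E) : C :=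
  letI := Classical.propDecidable
  if h : ∃ g : E →ₗ[C] E, ⇑g = ⇑e then LinearMap.trace C E h.choose else 0

/-- An ℝ-linear connection of the Lie algebra `L` (with anchor `ρ`) on the `C`-module `E`. -/
def IsConn {L C E : Type*} [LieRing L] [LieAlgebra ℝ L] [CommRing C] [Algebra ℝ C]
    [AddCommGroup E] [Module ℝ E] [Module C E]
    (ρ : L →ₗ[ℝ] Derivation ℝ C C) (D : L →ₗ[ℝ] Module.End ℝ E) : Prop :=
  ∀ (a : L) (f : C) (e : E), D a (f • e) = f • D a e + ρ a f • e

/-- The curvature of an ℝ-linear map `D : L →ₗ[ℝ] End ℝ E`. -/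
def curv {L E : Type*} [LieRing L] [LieAlgebra ℝ L] [AddCommGroup E] [Module ℝ E]
    (D : L →ₗ[ℝ] Module.End ℝ E) (a b : L) : Module.End ℝ E :=
  D a * D b - D b * D a - D ⁅a, b⁆

/-- The curvature as an `End ℝ E`-valued 2-form. -/
def curv2 {L E : Type*} [LieRing L] [LieAlgebra ℝ L] [AddCommGroup E] [Module ℝ E]
    (D : L →ₗ[ℝ] Module.End ℝ E) : (Fin 2 → L) → Module.End ℝ E :=
  fun a => curv D (a 0) (a 1)

/-- The Chevalley–Eilenberg style differential of a `V`-valued `n`-form on `L`,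
with respect to an action `act` of `L` on `V`:
`(dω)(a₁,…,a_{n+1}) = Σᵢ (−1)^{i+1} act(aᵢ)(ω(a₁,…,âᵢ,…)) +
  Σ_{i<j} (−1)^{i+j} ω(⁅aᵢ,aⱼ⁆, a₁,…,âᵢ,…,âⱼ,…)`. -/
def dGen {L V : Type*} [LieRing L] [AddCommGroup V] (act : L → V → V) :
    {n : ℕ} → ((Fin n → L) → V) → ((Fin (n + 1) → L) → V)
  | 0, ω, a => act (a 0) (ω Fin.elim0)
  | (m + 1), ω, a =>
      (∑ i : Fin (m + 2), (-1 : ℤ) ^ (i : ℕ) • act (a i) (ω (fun k => a (i.succAbove k)))) +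
      ∑ i : Fin (m + 2), ∑ j : Fin (m + 2),
        if h : (i : ℕ) < (j : ℕ) then
          (-1 : ℤ) ^ ((i : ℕ) + (j : ℕ)) • ω (Fin.cons ⁅a i, a j⁆
            (fun k : Fin m => a (j.succAbove
              ((⟨(i : ℕ), by have := j.isLt; omega⟩ : Fin (m + 1)).succAbove k))))
        else 0

/-- The differential `d_ρ` on `C`-valued ℝ-linear forms on `L`. -/
def dRho {L C : Type*} [LieRing L] [LieAlgebra ℝ L] [CommRing C] [Algebra ℝ C]
    (ρ : L →ₗ[ℝ] Derivation ℝ C C) {n : ℕ} (ω : (Fin n → L) → C) :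
    (Fin (n + 1) → L) → C :=
  dGen (fun a c => ρ a c) ω

/-- The differential `d^{∇̄}` on `End ℝ E`-valued ℝ-linear forms on `L`,
where `∇̄_a = [∇_a, ·]`. -/
def dEnd {L E : Type*} [LieRing L] [LieAlgebra ℝ L] [AddCommGroup E] [Module ℝ E]
    (D : L →ₗ[ℝ] Module.End ℝ E) {n : ℕ} (ω : (Fin n → L) → Module.End ℝ E) :
    (Fin (n + 1) → L) → Module.End ℝ E :=
  dGen (fun a φ => D a * φ - φ * D a) ω

/-- The wedge product (with composition as multiplication of values) of
`End ℝ E`-valued forms: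
`(ω∧η)(a₁,…,a_{m+n}) = (1/(m!·n!)) Σ_{τ} sgn τ · ω(a_{τ(1)},…) ∘ η(a_{τ(m+1)},…)`. -/
noncomputable def wedge {L E : Type*} [AddCommGroup E] [Module ℝ E] {m n : ℕ}
    (ω : (Fin m → L) → Module.End ℝ E) (η : (Fin n → L) → Module.End ℝ E) :
    (Fin (m + n) → L) → Module.End ℝ E :=
  fun a => ((m.factorial * n.factorial : ℝ))⁻¹ •
    ∑ τ : Equiv.Perm (Fin (m + n)), ((Equiv.Perm.sign τ : ℤ) •
      (ω (fun i => a (τ (Fin.castAdd n i))) * η (fun j => a (τ (Fin.natAdd m j)))))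

/-- The `p`-th wedge power of an `End ℝ E`-valued 2-form. -/
noncomputable def wpow {L E : Type*} [AddCommGroup E] [Module ℝ E]
    (R : (Fin 2 → L) → Module.End ℝ E) :
    (p : ℕ) → (Fin (2 * p) → L) → Module.End ℝ E
  | 0 => fun _ => 1
  | (p + 1) => fun a => wedge R (wpow R p) (fun i => a (Fin.cast (by omega) i))

/-- The `k`-th wedge power of an `End ℝ E`-valued 1-form. -/
noncomputable def wpow1 {L E : Type*} [AddCommGroup E] [Module ℝ E]
    (θ : (Fin 1 → L) → Module.End ℝ E) :
    (k : ℕ) → (Fin k → L) → Module.End ℝ E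
  | 0 => fun _ => 1
  | (k + 1) => fun a => wedge θ (wpow1 θ k) (fun i => a (Fin.cast (by omega) i))

/-- The Chern character form `ch_p(∇) = Tr_*((R^∇)^{∧p})`. -/
noncomputable def chp {L E : Type*} (C : Type*) [LieRing L] [LieAlgebra ℝ L]
    [CommRing C] [AddCommGroup E] [Module ℝ E] [Module C E]
    (D : L →ₗ[ℝ] Module.End ℝ E) (p : ℕ) : (Fin (2 * p) → L) → C :=
  fun a => trR C (wpow (curv2 D) p a)

/-- `∫₀ˢ f(t) dt` for a function `f : ℝ → C` given by a polynomial with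
coefficients in the ℝ-algebra `C` (and `0` if `f` is not polynomial). -/
noncomputable def intPolyTo {C : Type*} [CommRing C] [Algebra ℝ C] (s : ℝ) (f : ℝ → C) : C :=
  letI := Classical.propDecidable
  if h : ∃ P : Polynomial C, ∀ t : ℝ, f t = Polynomial.eval (algebraMap ℝ C t) P then
    ∑ k ∈ Finset.range (h.choose.natDegree + 1),
      (s ^ (k + 1) / ((k : ℝ) + 1)) • h.choose.coeff k
  else 0

/-- The valuewise integral over the standard 2-simplex
`Δ² = {(t₁,t₂) : t₁ ≥ 0, t₂ ≥ 0, t₁ + t₂ ≤ 1}` of a `C`-valued polynomial function. -/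
noncomputable def intSimplex2 {C : Type*} [CommRing C] [Algebra ℝ C] (f : ℝ → ℝ → C) : C :=
  intPolyTo 1 (fun t1 => intPolyTo (1 - t1) (fun t2 => f t1 t2))

/-- The Chern–Simons transgression form for a pair of ℝ-linear connections:
`cs_p(∇⁰,∇¹) = p·∫₀¹ Tr_*(λ ∧ (R_t)^{∧(p−1)}) dt` where `λ = ∇¹ − ∇⁰` and
`R_t` is the curvature of `∇⁰ + t•λ`. -/
noncomputable def csPair {L E : Type*} (C : Type*) [LieRing L] [LieAlgebra ℝ L]
    [CommRing C] [Algebra ℝ C] [AddCommGroup E] [Module ℝ E] [Module C E]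
    (D0 D1 : L →ₗ[ℝ] Module.End ℝ E) (p : ℕ) : (Fin (2 * (p - 1) + 1) → L) → C :=
  fun a => (p : ℝ) • intPolyTo 1 (fun t =>
    trR C (wedge (fun v : Fin 1 → L => (D1 - D0) (v 0))
      (wpow (curv2 (D0 + t • (D1 - D0))) (p - 1))
      (fun i => a (Fin.cast (by omega) i))))

/-- The Chern–Simons transgression form for a triple of ℝ-linear connections:
`cs_p(∇⁰,∇¹,∇²) = −p(p−1)·∫_{Δ²} Tr_*(λ₁ ∧ λ₂ ∧ (R_{(t₁,t₂)})^{∧(p−2)}) dt₁dt₂`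
where `λᵢ = ∇ⁱ − ∇⁰` and `R_{(t₁,t₂)}` is the curvature of `∇⁰ + t₁•λ₁ + t₂•λ₂`. -/
noncomputable def csTriple {L E : Type*} (C : Type*) [LieRing L] [LieAlgebra ℝ L]
    [CommRing C] [Algebra ℝ C] [AddCommGroup E] [Module ℝ E] [Module C E]
    (D0 D1 D2 : L →ₗ[ℝ] Module.End ℝ E) (p : ℕ) : (Fin (2 * (p - 2) + 2) → L) → C :=
  fun a => (-((p : ℝ) * ((p : ℝ) - 1))) • intSimplex2 (fun t1 t2 =>
    trR C (wedge (fun v : Fin 1 → L => (D1 - D0) (v 0))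
      (wedge (fun v : Fin 1 → L => (D2 - D0) (v 0))
        (wpow (curv2 (D0 + t1 • (D1 - D0) + t2 • (D2 - D0))) (p - 2)))
      (fun i => a (Fin.cast (by omega) i))))

/-!
Over a basis of `E` with connection matrix `A`, the endomorphism `∇̄_a φ` with `φ` of matrix `M` has
matrix `ρ a (M) + [A, M]`, with `ρ a` acting entrywise. Commutators have trace zero, so
`Tr (∇̄_a φ) = ρ a (Tr φ)`: the trace intertwines the action `∇̄` with the anchor. An additive map
intertwining two actions commutes with the differentials built from them.
-/

/-- `D` is a derivation of the `C`-module `E` over the derivation `δ` of `C`: the condition that a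
connection `∇` with anchor `ρ` imposes on `∇_a` and `ρ a`. -/
def IsDerivationOver {R C E : Type*} [CommSemiring R] [CommRing C] [Algebra R C]
    [AddCommGroup E] [Module R E] [Module C E]
    (δ : Derivation R C C) (D : Module.End R E) : Prop :=
  ∀ (f : C) (e : E), D (f • e) = f • D e + δ f • e

namespace IsDerivationOver

variable {R C E : Type*} [CommSemiring R] [CommRing C] [Algebra R C]
  [AddCommGroup E] [Module R E] [Module C E]
  {δ : Derivation R C C} {D : Module.End R E}

/-- The operator `[D, -]` on `End_C(E)`, which is `∇̄_a` when `D = ∇_a`. Its values are `C`-linear,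
although `D` is not, because the two `δ`-terms of the commutator cancel. -/
def commutator (hD : IsDerivationOver δ D) (φ : Module.End C E) : Module.End C E where
  toFun e := D (φ e) - φ (D e)
  map_add' x y := by simp only [map_add]; abel
  map_smul' f x := by
    simp only [map_smul, hD f, map_add, RingHom.id_apply, smul_sub]
    abel

theorem commutator_apply (hD : IsDerivationOver δ D) (φ : Module.End C E) (e : E) :
    hD.commutator φ e = D (φ e) - φ (D e) :=
  rfl

theorem restrictScalars_commutator [LinearMap.CompatibleSMul E E R C]
    (hD : IsDerivationOver δ D) (φ : Module.End C E) :
    (hD.commutator φ).restrictScalars R =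
      D * φ.restrictScalars R - φ.restrictScalars R * D :=
  rfl

theorem basis_repr_apply {ι : Type*} [Fintype ι] (hD : IsDerivationOver δ D) (b : Basis ι C E)
    (e : E) (i : ι) :
    b.repr (D e) i = δ (b.repr e i) + (b.toMatrix (D ∘ b)).mulVec (b.repr e) i := by
  classical
  have expand : D e = ∑ j, (b.repr e j • D (b j) + δ (b.repr e j) • b j) := by
    conv_lhs => rw [← b.sum_repr e, map_sum]
    exact Finset.sum_congr rfl fun j _ => hD _ _
  simp [expand, Finset.sum_add_distrib, Matrix.mulVec, dotProduct, Basis.toMatrix_apply,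
    Finsupp.single_apply, mul_comm, add_comm]

theorem toMatrix_commutator {ι : Type*} [Fintype ι] [DecidableEq ι] (hD : IsDerivationOver δ D)
    (b : Basis ι C E) (φ : Module.End C E) :
    LinearMap.toMatrix b b (hD.commutator φ) =
      (LinearMap.toMatrix b b φ).map δ +
        (b.toMatrix (D ∘ b) * LinearMap.toMatrix b b φ -
          LinearMap.toMatrix b b φ * b.toMatrix (D ∘ b)) := by
  ext i j
  have repr_map_apply : b.repr (D (φ (b j))) i = δ (LinearMap.toMatrix b b φ i j) +
      (b.toMatrix (D ∘ b) * LinearMap.toMatrix b b φ) i j := by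
    rw [hD.basis_repr_apply b]
    simp only [Matrix.mulVec, dotProduct, Matrix.mul_apply, LinearMap.toMatrix_apply]
  have repr_apply_map : b.repr (φ (D (b j))) i =
      (LinearMap.toMatrix b b φ * b.toMatrix (D ∘ b)) i j := by
    rw [← LinearMap.toMatrix_mulVec_repr b b φ]
    rfl
  rw [LinearMap.toMatrix_apply, commutator_apply, map_sub, Finsupp.sub_apply, repr_map_apply,
    repr_apply_map, add_sub_assoc, Matrix.add_apply, Matrix.sub_apply, Matrix.map_apply]

theorem trace_commutator [Module.Finite C E] [Module.Free C E] (hD : IsDerivationOver δ D)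
    (φ : Module.End C E) :
    LinearMap.trace C E (hD.commutator φ) = δ (LinearMap.trace C E φ) := by
  classical
  let b := Module.Free.chooseBasis C E
  rw [LinearMap.trace_eq_matrix_trace C b, LinearMap.trace_eq_matrix_trace C b φ,
    hD.toMatrix_commutator b, Matrix.trace_add, Matrix.trace_sub, Matrix.trace_mul_comm, sub_self,
    add_zero]
  exact (AddMonoidHom.map_trace δ _).symm

end IsDerivationOver

theorem map_dGen {L V W F : Type*} [LieRing L] [AddCommGroup V] [AddCommGroup W]
    [FunLike F V W] [AddMonoidHomClass F V W] (T : F)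
    {actV : L → V → V} {actW : L → W → W} (hT : ∀ a x, T (actV a x) = actW a (T x))
    {n : ℕ} (ω : (Fin n → L) → V) (v : Fin (n + 1) → L) :
    T (dGen actV ω v) = dGen actW (fun u => T (ω u)) v := by
  cases n with
  | zero => exact hT _ _
  | succ m => simp only [dGen, map_add, map_sum, map_zsmul, hT, apply_dite T, map_zero]

theorem trR_restrictScalars {C E : Type*} [CommRing C] [AddCommGroup E] [Module ℝ E]
    [Module C E] [LinearMap.CompatibleSMul E E ℝ C] (φ : Module.End C E) :
    trR C (φ.restrictScalars ℝ) = LinearMap.trace C E φ := by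
  have lift : ∃ g : Module.End C E, ⇑g = ⇑(φ.restrictScalars ℝ) := ⟨φ, rfl⟩
  have choose_eq : lift.choose = φ := DFunLike.coe_injective lift.choose_spec
  rw [trR, dif_pos lift, choose_eq]

theorem stmt3_general {L C E : Type*} [LieRing L] [LieAlgebra ℝ L] [CommRing C] [Algebra ℝ C]
    [AddCommGroup E] [Module ℝ E] [Module C E] [IsScalarTower ℝ C E]
    [Module.Finite C E] [Module.Free C E]
    (ρ : L →ₗ[ℝ] Derivation ℝ C C) (D : L →ₗ[ℝ] Module.End ℝ E) (hD : IsConn ρ D) {n : ℕ}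
    (ω : (Fin n → L) → Module.End C E) :
    dRho ρ (fun v => LinearMap.trace C E (ω v))
      = fun v => trR C (dEnd D (fun u => (ω u).restrictScalars ℝ) v) := by
  have isDerivationOver (a : L) : IsDerivationOver (ρ a) (D a) := hD a
  funext v
  calc dRho ρ (fun u => LinearMap.trace C E (ω u)) v
      = LinearMap.trace C E (dGen (fun a => (isDerivationOver a).commutator) ω v) :=
        (map_dGen _ (fun a => (isDerivationOver a).trace_commutator) ω v).symm
    _ = trR C ((dGen (fun a => (isDerivationOver a).commutator) ω v).restrictScalars ℝ) :=
        (trR_restrictScalars _).symm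
    _ = trR C (dEnd D (fun u => (ω u).restrictScalars ℝ) v) :=
        congrArg (trR C) <| map_dGen (LinearMap.restrictScalarsₗ ℝ C E E ℤ)
          (fun a => (isDerivationOver a).restrictScalars_commutator) ω v

/-- `d_ρ ∘ Tr_* = Tr_* ∘ d^{∇̄}` on `End_C(E)`-valued ℝ-linear forms. -/
theorem stmt3 {L : Type*} {C : Type*} {E : Type*}
    [LieRing L] [LieAlgebra ℝ L] [CommRing C] [Algebra ℝ C] [Module C L]
    [AddCommGroup E] [Module ℝ E] [Module C E] [IsScalarTower ℝ C E]
    [Module.Finite C E] [Module.Free C E]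
    (ρ : L →ₗ[ℝ] Derivation ℝ C C)
    (hρ : ∀ (a b : L) (f : C), ρ ⁅a, b⁆ f = ρ a (ρ b f) - ρ b (ρ a f))
    (hLeib : ∀ (a b : L) (f : C), ⁅a, f • b⁆ = f • ⁅a, b⁆ + ρ a f • b)
    (D : L →ₗ[ℝ] Module.End ℝ E) (hD : IsConn ρ D) (n : ℕ)
    (ω : AlternatingMap ℝ L (E →ₗ[C] E) (Fin n)) :
    dRho ρ (fun v => LinearMap.trace C E (ω v))
      = fun v => trR C (dEnd D (fun u => (ω u).restrictScalars ℝ) v) := by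
  exact stmt3_general ρ D hD ω
end

section
/- For every ℝ-linear connection ∇ of L on E and every p ≥ 1, the Chern character form ch_p(∇) is closed: d_ρ(ch_p(∇)) = 0. -/
open Module

/-!
For an arbitrary linear map `D : L → End V`, Cartan calculus (induction on the degree by contraction
with vectors) gives `d² = R ∧ ·` on `V`-valued forms, where `R` is the curvature of `D`. Hence `d`
commutes with `R ∧ ·`, both compositions being `d³`: this is the Bianchi identity. Now let `V` be an
associative algebra on which `L` acts by the commutators `[D x, ·]`. Left multiplication by `D` has
curvature left multiplication by `R`, and right multiplication by `D` commutes with it, so the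
commutator differential also commutes with `R ∧ ·`. Therefore `d(R ∧ ⋯ ∧ R) = R ∧ ⋯ ∧ R ∧ d1 = 0`.

For a connection `∇` over `ρ`, the powers of the curvature are valued in `C`-linear endomorphisms,
where the trace intertwines `[∇_a, ·]` with `ρ(a)`, hence the commutator differential with `d_ρ`.
-/

section AlternatingForms

open AlternatingMap

variable {R M N : Type*} [CommRing R] [AddCommGroup M] [Module R M] [AddCommGroup N] [Module R N]
  {n : ℕ}

theorem ext_curryLeft {ω η : M [⋀^Fin (n + 1)]→ₗ[R] N}
    (h : ∀ x, ω.curryLeft x = η.curryLeft x) : ω = η := by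
  ext v
  rw [← Fin.cons_self_tail v]
  exact congr($(h _) _)

theorem curryLeft_swap (ω : M [⋀^Fin (n + 2)]→ₗ[R] N) (x y : M) :
    (ω.curryLeft x).curryLeft y = -(ω.curryLeft y).curryLeft x := by
  have h := curryLeft_same ω (x + y)
  rw [eq_neg_iff_add_eq_zero]
  simpa [curryLeft_same, add_comm] using h

theorem curryLeft_sub (ω η : M [⋀^Fin (n + 1)]→ₗ[R] N) :
    (ω - η).curryLeft = ω.curryLeft - η.curryLeft :=
  map_sub curryLeftLinearMap ω η

theorem curryLeft_alternatizeUncurryFin_zero (f : M →ₗ[R] M [⋀^Fin 0]→ₗ[R] N) (x : M) :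
    (alternatizeUncurryFin f).curryLeft x = f x := by
  ext v
  simp [alternatizeUncurryFin_apply, Subsingleton.elim _ v]

theorem curryLeft_alternatizeUncurryFin_succ (f : M →ₗ[R] M [⋀^Fin (n + 1)]→ₗ[R] N) (x : M) :
    (alternatizeUncurryFin f).curryLeft x =
      f x - alternatizeUncurryFin (curryLeftLinearMap.flip x ∘ₗ f) := by
  ext v
  have removeNth_succ (i : Fin (n + 1)) :
      i.succ.removeNth (Matrix.vecCons x v) = Matrix.vecCons x (i.removeNth v) :=
    Fin.cons_comp_succ_succAbove x v i
  rw [curryLeft_apply_apply, alternatizeUncurryFin_apply, Fin.sum_univ_succ]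
  simp [alternatizeUncurryFin_apply, removeNth_succ, pow_succ, sub_eq_add_neg]

/-- The action of the endomorphisms of `N` on the values of the `N`-valued `n`-forms on `M`. -/
def smulForm : Module.End R N →ₗ[R] (M [⋀^Fin n]→ₗ[R] N) →ₗ[R] M [⋀^Fin n]→ₗ[R] N :=
  LinearMap.mk₂ R (fun T ω ↦ T • ω) add_smul (fun _ _ _ ↦ rfl) smul_add (fun c T ω ↦ by ext; simp)

@[simp]
theorem smulForm_apply (T : Module.End R N) (ω : M [⋀^Fin n]→ₗ[R] N) : smulForm T ω = T • ω :=
  rfl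

theorem curryLeft_end_smul (T : Module.End R N) (ω : M [⋀^Fin (n + 1)]→ₗ[R] N) (x : M) :
    (T • ω).curryLeft x = T • ω.curryLeft x :=
  rfl

/-- The wedge product `θ ∧ ω` of an `End N`-valued 1-form with an `N`-valued `n`-form. -/
def wedgeOne : (M →ₗ[R] Module.End R N) →ₗ[R] (M [⋀^Fin n]→ₗ[R] N) →ₗ[R]
    M [⋀^Fin (n + 1)]→ₗ[R] N :=
  LinearMap.mk₂ R (fun θ ω ↦ alternatizeUncurryFin (smulForm.flip ω ∘ₗ θ))
    (fun θ₁ θ₂ ω ↦ by rw [LinearMap.comp_add, alternatizeUncurryFin_add])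
    (fun c θ ω ↦ by rw [LinearMap.comp_smul, alternatizeUncurryFin_smul])
    (fun θ ω₁ ω₂ ↦ by rw [map_add, LinearMap.add_comp, alternatizeUncurryFin_add])
    (fun c θ ω ↦ by rw [map_smul, LinearMap.smul_comp, alternatizeUncurryFin_smul])

theorem wedgeOne_apply (θ : M →ₗ[R] Module.End R N) (ω : M [⋀^Fin n]→ₗ[R] N) :
    wedgeOne θ ω = alternatizeUncurryFin (smulForm.flip ω ∘ₗ θ) :=
  rfl

theorem curryLeft_wedgeOne_zero (θ : M →ₗ[R] Module.End R N) (ω : M [⋀^Fin 0]→ₗ[R] N) (x : M) :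
    (wedgeOne θ ω).curryLeft x = θ x • ω :=
  curryLeft_alternatizeUncurryFin_zero _ x

theorem curryLeft_wedgeOne_succ (θ : M →ₗ[R] Module.End R N) (ω : M [⋀^Fin (n + 1)]→ₗ[R] N)
    (x : M) : (wedgeOne θ ω).curryLeft x = θ x • ω - wedgeOne θ (ω.curryLeft x) :=
  curryLeft_alternatizeUncurryFin_succ _ x

theorem wedgeOne_smul_of_commute {θ : M →ₗ[R] Module.End R N} {T : Module.End R N}
    (h : ∀ x, Commute (θ x) T) (ω : M [⋀^Fin n]→ₗ[R] N) :
    wedgeOne θ (T • ω) = T • wedgeOne θ ω := by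
  rw [wedgeOne_apply, wedgeOne_apply, ← alternatizeUncurryFin_smul]
  congr 1
  ext x : 1
  exact (smul_smul _ _ ω).trans ((h x).eq ▸ mul_smul T _ ω)

theorem wedgeOne_alternatizeUncurryFin (θ : M →ₗ[R] Module.End R N)
    (f : M →ₗ[R] M [⋀^Fin n]→ₗ[R] N) :
    wedgeOne θ (alternatizeUncurryFin f) = -alternatizeUncurryFin (wedgeOne θ ∘ₗ f) := by
  let s : M →ₗ[R] M →ₗ[R] M [⋀^Fin n]→ₗ[R] N := (smulForm ∘ₗ θ).compl₂ f
  have symm : alternatizeUncurryFin (alternatizeUncurryFinLM ∘ₗ (s + s.flip)) = 0 :=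
    alternatizeUncurryFin_alternatizeUncurryFinLM_comp_of_symmetric fun x y ↦ add_comm _ _
  rw [LinearMap.comp_add, alternatizeUncurryFin_add] at symm
  rw [eq_neg_iff_add_eq_zero, ← symm, wedgeOne_apply]
  congr 2
  ext x : 1
  exact (alternatizeUncurryFin_smul (θ x) f).symm

theorem wedgeOne_wedgeOne_of_commute {θ η : M →ₗ[R] Module.End R N}
    (h : ∀ x y, Commute (θ x) (η y)) (ω : M [⋀^Fin n]→ₗ[R] N) :
    wedgeOne θ (wedgeOne η ω) = -wedgeOne η (wedgeOne θ ω) := by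
  rw [wedgeOne_apply η, wedgeOne_alternatizeUncurryFin, wedgeOne_apply η]
  congr 2
  ext x : 1
  exact wedgeOne_smul_of_commute (h · x) ω

section Wedge

variable [Invertible (2 : R)]

/-- The wedge product `K ∧ ω` of an `End N`-valued 2-form with an `N`-valued `n`-form.
The 2-form is given as a bilinear map, each of whose values at a pair of vectors
the iterated alternatization takes twice. -/
def wedgeTwo (K : M →ₗ[R] M →ₗ[R] Module.End R N) :
    (M [⋀^Fin n]→ₗ[R] N) →ₗ[R] M [⋀^Fin (n + 2)]→ₗ[R] N :=
  (⅟2 : R) • alternatizeUncurryFinLM ∘ₗ (wedgeOne ∘ₗ K).flip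

theorem wedgeTwo_apply (K : M →ₗ[R] M →ₗ[R] Module.End R N) (ω : M [⋀^Fin n]→ₗ[R] N) :
    wedgeTwo K ω = (⅟2 : R) • alternatizeUncurryFin (wedgeOne.flip ω ∘ₗ K) :=
  rfl

theorem curryLeft_wedgeTwo_zero {K : M →ₗ[R] M →ₗ[R] Module.End R N} (hK : K.IsAlt)
    (ω : M [⋀^Fin 0]→ₗ[R] N) (x : M) :
    (wedgeTwo K ω).curryLeft x = wedgeOne (K x) ω := by
  have contract : curryLeftLinearMap.flip x ∘ₗ wedgeOne.flip ω ∘ₗ K =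
      -(smulForm.flip ω ∘ₗ K x) := by
    ext y : 1
    simp [curryLeft_wedgeOne_zero, ← hK.neg x y]
  rw [wedgeTwo_apply, curryLeft_smul, LinearMap.smul_apply, curryLeft_alternatizeUncurryFin_succ,
    contract, ← alternatizeUncurryFinLM_apply, map_neg]
  change (⅟2 : R) • (wedgeOne (K x) ω - -wedgeOne (K x) ω) = _
  linear_combination (norm := module) (invOf_mul_self (2 : R)) • wedgeOne (K x) ω

theorem curryLeft_wedgeTwo_succ {K : M →ₗ[R] M →ₗ[R] Module.End R N} (hK : K.IsAlt)
    (ω : M [⋀^Fin (n + 1)]→ₗ[R] N) (x : M) :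
    (wedgeTwo K ω).curryLeft x = wedgeOne (K x) ω + wedgeTwo K (ω.curryLeft x) := by
  have contract : curryLeftLinearMap.flip x ∘ₗ wedgeOne.flip ω ∘ₗ K =
      -(smulForm.flip ω ∘ₗ K x) - wedgeOne.flip (ω.curryLeft x) ∘ₗ K := by
    ext y : 1
    simp [curryLeft_wedgeOne_succ, ← hK.neg x y]
  rw [wedgeTwo_apply, curryLeft_smul, LinearMap.smul_apply, curryLeft_alternatizeUncurryFin_succ,
    contract, ← alternatizeUncurryFinLM_apply, map_sub, map_neg, wedgeTwo_apply]
  change (⅟2 : R) • (wedgeOne (K x) ω - (-wedgeOne (K x) ω -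
    alternatizeUncurryFin (wedgeOne.flip (ω.curryLeft x) ∘ₗ K))) = _
  linear_combination (norm := module) (invOf_mul_self (2 : R)) • wedgeOne (K x) ω

theorem wedgeOne_wedgeTwo_of_commute {θ : M →ₗ[R] Module.End R N}
    {K : M →ₗ[R] M →ₗ[R] Module.End R N} (h : ∀ x y z, Commute (θ x) (K y z))
    (ω : M [⋀^Fin n]→ₗ[R] N) : wedgeOne θ (wedgeTwo K ω) = wedgeTwo K (wedgeOne θ ω) := by
  rw [wedgeTwo_apply, map_smul, wedgeOne_alternatizeUncurryFin, wedgeTwo_apply,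
    ← neg_one_smul R, ← alternatizeUncurryFin_smul]
  congr 2
  ext x : 1
  simp [wedgeOne_wedgeOne_of_commute (h · x ·)]

end Wedge

end AlternatingForms

section CartanCalculus

open AlternatingMap

variable {R L V : Type*} [CommRing R] [LieRing L] [LieAlgebra R L] [AddCommGroup V] [Module R V]

section Curvature

variable {A : Type*} [Ring A] [Algebra R A]

/-- The curvature `[D x, D y] - D ⁅x, y⁆` of a linear map `D` from a Lie algebra to an associative
algebra, as a bilinear map. -/
def curvatureForm (D : L →ₗ[R] A) : L →ₗ[R] L →ₗ[R] A :=
  LinearMap.mk₂ R (fun x y ↦ D x * D y - D y * D x - D ⁅x, y⁆)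
    (fun x y z ↦ by simp only [map_add, add_mul, mul_add, add_lie]; abel)
    (fun c x y ↦ by simp only [map_smul, smul_mul_assoc, mul_smul_comm, smul_lie, smul_sub])
    (fun x y z ↦ by simp only [map_add, add_mul, mul_add, lie_add]; abel)
    (fun c x y ↦ by simp only [map_smul, smul_mul_assoc, mul_smul_comm, lie_smul, smul_sub])

theorem curvatureForm_apply (D : L →ₗ[R] A) (x y : L) :
    curvatureForm D x y = D x * D y - D y * D x - D ⁅x, y⁆ :=
  rfl

theorem curvatureForm_isAlt (D : L →ₗ[R] A) : (curvatureForm D).IsAlt := fun x ↦ by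
  simp [curvatureForm_apply]

theorem curvatureForm_compr₂_lmul (D : L →ₗ[R] A) :
    (curvatureForm D).compr₂ (LinearMap.mul R A) = curvatureForm (LinearMap.mul R A ∘ₗ D) := by
  ext x y a
  simp [curvatureForm_apply, mul_assoc]

end Curvature

/-- The substitution of `⁅x, ·⁆` into a form: `adSubst x ω` is the sum of the forms obtained by
applying `⁅x, ·⁆` to one of the arguments of `ω`. -/
def adSubst : {n : ℕ} → L →ₗ[R] (L [⋀^Fin n]→ₗ[R] V) →ₗ[R] L [⋀^Fin n]→ₗ[R] V
  | 0 => 0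
  | _ + 1 => LinearMap.mk₂ R
      (fun x ω ↦ alternatizeUncurryFin (ω.curryLeft ∘ₗ LieAlgebra.ad R L x))
      (fun x y ω ↦ by simp [LinearMap.comp_add])
      (fun c x ω ↦ by simp [LinearMap.comp_smul])
      (fun x ω η ↦ by simp [LinearMap.add_comp])
      (fun c x ω ↦ by simp [LinearMap.smul_comp])

variable {n : ℕ}

theorem adSubst_zero (x : L) (ω : L [⋀^Fin 0]→ₗ[R] V) : adSubst x ω = 0 :=
  rfl

theorem adSubst_succ (x : L) (ω : L [⋀^Fin (n + 1)]→ₗ[R] V) :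
    adSubst x ω = alternatizeUncurryFin (ω.curryLeft ∘ₗ LieAlgebra.ad R L x) :=
  rfl

theorem curryLeft_adSubst (x y : L) (ω : L [⋀^Fin (n + 1)]→ₗ[R] V) :
    (adSubst x ω).curryLeft y = ω.curryLeft ⁅x, y⁆ + adSubst x (ω.curryLeft y) := by
  cases n with
  | zero => simp [adSubst_zero, adSubst_succ, curryLeft_alternatizeUncurryFin_zero]
  | succ n =>
    have contract : curryLeftLinearMap.flip y ∘ₗ ω.curryLeft ∘ₗ LieAlgebra.ad R L x =
        -((ω.curryLeft y).curryLeft ∘ₗ LieAlgebra.ad R L x) := by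
      ext z : 1
      exact curryLeft_swap ω ⁅x, z⁆ y
    rw [adSubst_succ, curryLeft_alternatizeUncurryFin_succ, contract,
      ← alternatizeUncurryFinLM_apply, map_neg, sub_neg_eq_add]
    rfl

/-- The Lie derivative of `V`-valued forms along an element of `L` that acts on `V` through `D`. -/
def lieDeriv (D : L →ₗ[R] Module.End R V) :
    L →ₗ[R] (L [⋀^Fin n]→ₗ[R] V) →ₗ[R] L [⋀^Fin n]→ₗ[R] V :=
  smulForm ∘ₗ D - adSubst

theorem lieDeriv_apply (D : L →ₗ[R] Module.End R V) (x : L) (ω : L [⋀^Fin n]→ₗ[R] V) :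
    lieDeriv D x ω = D x • ω - adSubst x ω :=
  rfl

theorem curryLeft_lieDeriv (D : L →ₗ[R] Module.End R V) (x y : L)
    (ω : L [⋀^Fin (n + 1)]→ₗ[R] V) :
    (lieDeriv D x ω).curryLeft y = lieDeriv D x (ω.curryLeft y) - ω.curryLeft ⁅x, y⁆ := by
  change D x • ω.curryLeft y - (adSubst x ω).curryLeft y = _
  rw [curryLeft_adSubst, lieDeriv_apply, sub_sub, add_comm]

theorem lieDeriv_lieDeriv_sub (D : L →ₗ[R] Module.End R V) (x y : L) (ω : L [⋀^Fin n]→ₗ[R] V) :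
    lieDeriv D x (lieDeriv D y ω) - lieDeriv D y (lieDeriv D x ω) =
      lieDeriv D ⁅x, y⁆ ω + curvatureForm D x y • ω := by
  induction n with
  | zero =>
    ext v
    simp [lieDeriv_apply, adSubst_zero, curvatureForm_apply]
  | succ n ih =>
    refine ext_curryLeft fun z ↦ ?_
    have jacobi : ω.curryLeft ⁅⁅x, y⁆, z⁆ = ω.curryLeft ⁅x, ⁅y, z⁆⁆ - ω.curryLeft ⁅y, ⁅x, z⁆⁆ := by
      rw [← map_sub, lie_lie]
    simp only [curryLeft_sub, curryLeft_add, LinearMap.sub_apply, LinearMap.add_apply,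
      curryLeft_end_smul, curryLeft_lieDeriv, map_sub]
    rw [jacobi, ← sub_eq_iff_eq_add'.mpr (ih (ω.curryLeft z))]
    abel

section CovDiff

variable [Invertible (2 : R)]

/-- The covariant exterior differential of `V`-valued forms on `L`. The term `adSubst x ω` runs over
the ordered pairs of arguments of the differential, hence counts every unordered pair twice. -/
def covDiff (D : L →ₗ[R] Module.End R V) :
    (L [⋀^Fin n]→ₗ[R] V) →ₗ[R] L [⋀^Fin (n + 1)]→ₗ[R] V :=
  wedgeOne D - (⅟2 : R) • alternatizeUncurryFinLM ∘ₗ adSubst.flip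

theorem covDiff_apply (D : L →ₗ[R] Module.End R V) (ω : L [⋀^Fin n]→ₗ[R] V) :
    covDiff D ω = wedgeOne D ω - (⅟2 : R) • alternatizeUncurryFin (adSubst.flip ω) :=
  rfl

theorem covDiff_add (D A : L →ₗ[R] Module.End R V) (ω : L [⋀^Fin n]→ₗ[R] V) :
    covDiff (D + A) ω = covDiff D ω + wedgeOne A ω := by
  rw [covDiff_apply, covDiff_apply, map_add, LinearMap.add_apply]
  abel

theorem curryLeft_covDiff_zero (D : L →ₗ[R] Module.End R V) (ω : L [⋀^Fin 0]→ₗ[R] V) (x : L) :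
    (covDiff D ω).curryLeft x = lieDeriv D x ω := by
  have adSubst_flip : adSubst.flip ω = 0 := LinearMap.ext (adSubst_zero · ω)
  rw [covDiff_apply, adSubst_flip, ← alternatizeUncurryFinLM_apply, _root_.map_zero, smul_zero,
    sub_zero, curryLeft_wedgeOne_zero, lieDeriv_apply, adSubst_zero, sub_zero]

theorem curryLeft_covDiff_succ (D : L →ₗ[R] Module.End R V) (ω : L [⋀^Fin (n + 1)]→ₗ[R] V)
    (x : L) : (covDiff D ω).curryLeft x = lieDeriv D x ω - covDiff D (ω.curryLeft x) := by
  have contract : curryLeftLinearMap.flip x ∘ₗ adSubst.flip ω =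
      adSubst.flip (ω.curryLeft x) - ω.curryLeft ∘ₗ LieAlgebra.ad R L x := by
    ext y : 1
    change (adSubst y ω).curryLeft x = adSubst y (ω.curryLeft x) - ω.curryLeft ⁅x, y⁆
    rw [curryLeft_adSubst, ← lie_skew, map_neg]
    abel
  have contract_alt : (alternatizeUncurryFin (adSubst.flip ω)).curryLeft x =
      adSubst x ω - (alternatizeUncurryFin (adSubst.flip (ω.curryLeft x)) - adSubst x ω) := by
    rw [curryLeft_alternatizeUncurryFin_succ, contract, ← alternatizeUncurryFinLM_apply, map_sub]
    rfl
  rw [covDiff_apply, covDiff_apply, curryLeft_sub, LinearMap.sub_apply, curryLeft_smul,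
    LinearMap.smul_apply, contract_alt, curryLeft_wedgeOne_succ, lieDeriv_apply]
  generalize D x • ω = η
  linear_combination (norm := module) -(invOf_mul_self (2 : R)) • adSubst x ω

theorem lieDeriv_covDiff (D : L →ₗ[R] Module.End R V) (x : L) (ω : L [⋀^Fin n]→ₗ[R] V) :
    lieDeriv D x (covDiff D ω) = covDiff D (lieDeriv D x ω) + wedgeOne (curvatureForm D x) ω := by
  induction n with
  | zero =>
    refine ext_curryLeft fun y ↦ ?_
    simp only [curryLeft_add, LinearMap.add_apply, curryLeft_lieDeriv, curryLeft_covDiff_zero,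
      curryLeft_wedgeOne_zero]
    rw [sub_eq_iff_eq_add, add_assoc, add_comm (_ • ω), ← lieDeriv_lieDeriv_sub]
    abel
  | succ n ih =>
    refine ext_curryLeft fun y ↦ ?_
    simp only [curryLeft_add, LinearMap.add_apply, curryLeft_lieDeriv, curryLeft_covDiff_succ,
      curryLeft_wedgeOne_succ, map_sub, ih]
    rw [← sub_eq_iff_eq_add'.mpr (lieDeriv_lieDeriv_sub D x y ω)]
    abel

-- By Cartan's formula, contraction with `x` turns `d²` into `[L_x, d] + d² ι_x`.
theorem covDiff_covDiff (D : L →ₗ[R] Module.End R V) (ω : L [⋀^Fin n]→ₗ[R] V) :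
    covDiff D (covDiff D ω) = wedgeTwo (curvatureForm D) ω := by
  induction n with
  | zero =>
    refine ext_curryLeft fun x ↦ ?_
    rw [curryLeft_covDiff_succ, curryLeft_covDiff_zero, lieDeriv_covDiff, add_sub_cancel_left,
      curryLeft_wedgeTwo_zero (curvatureForm_isAlt D)]
  | succ n ih =>
    refine ext_curryLeft fun x ↦ ?_
    rw [curryLeft_covDiff_succ, curryLeft_covDiff_succ, lieDeriv_covDiff, map_sub, ih,
      curryLeft_wedgeTwo_succ (curvatureForm_isAlt D)]
    abel

theorem covDiff_wedgeTwo_curvatureForm (D : L →ₗ[R] Module.End R V) (ω : L [⋀^Fin n]→ₗ[R] V) :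
    covDiff D (wedgeTwo (curvatureForm D) ω) = wedgeTwo (curvatureForm D) (covDiff D ω) := by
  rw [← covDiff_covDiff, covDiff_covDiff]

theorem covDiff_add_wedgeTwo_curvatureForm {D A : L →ₗ[R] Module.End R V}
    (h : ∀ x y z, Commute (A x) (curvatureForm D y z)) (ω : L [⋀^Fin n]→ₗ[R] V) :
    covDiff (D + A) (wedgeTwo (curvatureForm D) ω) =
      wedgeTwo (curvatureForm D) (covDiff (D + A) ω) := by
  rw [covDiff_add, covDiff_add, map_add, covDiff_wedgeTwo_curvatureForm,
    wedgeOne_wedgeTwo_of_commute h]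

end CovDiff

end CartanCalculus

section Alternatization

open AlternatingMap MultilinearMap

variable {R M N : Type*} [CommRing R] [AddCommGroup M] [Module R M] [AddCommGroup N] [Module R N]
  {n : ℕ}

-- A permutation of `Fin (n + 1)` is determined by the image `p` of `0` and by the permutation that
-- it induces between the complements of `0` and of `p`.
theorem alternatization_apply_eq_sum_curryLeft (f : MultilinearMap R (fun _ : Fin (n + 1) ↦ M) N)
    (v : Fin (n + 1) → M) :
    alternatization f v =
      ∑ p : Fin (n + 1), (-1) ^ (p : ℕ) • alternatization (f.curryLeft (v p)) (p.removeNth v) := by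
  let perm (q : Fin (n + 1) × Equiv.Perm (Fin n)) : Equiv.Perm (Fin (n + 1)) :=
    q.1.cycleRange.symm * Equiv.Perm.decomposeFin.symm (0, q.2)
  have perm_zero (q) : perm q 0 = q.1 := by simp [perm]
  have perm_succ (q) (k : Fin n) : perm q k.succ = q.1.succAbove (q.2 k) := by simp [perm]
  have perm_injective : Function.Injective perm := fun q r h ↦ by
    have fst_eq : q.1 = r.1 := by rw [← perm_zero, h, perm_zero]
    refine Prod.ext fst_eq (Equiv.ext fun k ↦ ?_)
    apply Fin.succAbove_right_injective (p := q.1)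
    rw [← perm_succ, h, perm_succ, fst_eq]
  have perm_bijective : Function.Bijective perm :=
    (Fintype.bijective_iff_injective_and_card perm).mpr
      ⟨perm_injective, by simp [Fintype.card_perm, Nat.factorial_succ]⟩
  have sign_perm (q) : Equiv.Perm.sign (perm q) = (-1) ^ (q.1 : ℕ) * Equiv.Perm.sign q.2 := by
    simp [perm, Fin.sign_cycleRange]
  have comp_perm (q) : v ∘ perm q = Fin.cons (v q.1) (q.1.removeNth v ∘ q.2) := by
    ext k
    cases k using Fin.cases <;> simp [perm_zero, perm_succ, Fin.removeNth]
  rw [alternatization_apply, ← perm_bijective.sum_comp, Fintype.sum_prod_type]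
  refine Fintype.sum_congr _ _ fun p ↦ ?_
  rw [alternatization_apply, Finset.smul_sum]
  refine Fintype.sum_congr _ _ fun τ ↦ ?_
  have apply_perm : f.domDomCongr (perm (p, τ)) v =
      (f.curryLeft (v p)).domDomCongr τ (p.removeNth v) :=
    congrArg f (comp_perm (p, τ))
  rw [sign_perm, mul_smul, apply_perm, Units.smul_def, Units.val_pow_eq_pow_val, Units.val_neg,
    Units.val_one]

theorem alternatization_uncurryLeft (f : M →ₗ[R] M [⋀^Fin n]→ₗ[R] N) :
    alternatization (toMultilinearMapLM ∘ₗ f).uncurryLeft =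
      n.factorial • alternatizeUncurryFin f := by
  have alternatization_coe (ω : M [⋀^Fin n]→ₗ[R] N) :
      alternatization (ω : MultilinearMap R (fun _ : Fin n ↦ M) N) = n.factorial • ω := by
    rw [AlternatingMap.coe_alternatization, Fintype.card_fin]
  ext v
  rw [alternatization_apply_eq_sum_curryLeft, ← alternatizeUncurryFin_smul,
    alternatizeUncurryFin_apply]
  refine Fintype.sum_congr _ _ fun p ↦ ?_
  rw [LinearMap.curry_uncurryLeft]
  exact congr((-1) ^ (p : ℕ) • $(alternatization_coe (f (v p))) (p.removeNth v))

theorem factorial_smul_wedgeTwo_apply [Invertible (2 : R)] (K : M →ₗ[R] M →ₗ[R] Module.End R N)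
    (ω : M [⋀^Fin n]→ₗ[R] N) (v : Fin (n + 2) → M) :
    (2 * n.factorial) • wedgeTwo K ω v = ∑ σ : Equiv.Perm (Fin (n + 2)),
      Equiv.Perm.sign σ • K (v (σ 0)) (v (σ 1)) (ω fun k ↦ v (σ k.succ.succ)) := by
  let f : M →ₗ[R] MultilinearMap R (fun _ : Fin (n + 1) ↦ M) N :=
    (multilinearCurryLeftEquiv R (fun _ ↦ M) N).symm.toLinearMap ∘ₗ
      K.compr₂ (toMultilinearMapLM ∘ₗ smulForm.flip ω)
  have alternatization_f (x : M) : alternatization (f x) = n.factorial • wedgeOne (K x) ω :=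
    alternatization_uncurryLeft (smulForm.flip ω ∘ₗ K x)
  have two_smul_wedgeTwo :
      (2 : ℕ) • wedgeTwo K ω = alternatizeUncurryFin (wedgeOne.flip ω ∘ₗ K) := by
    rw [wedgeTwo_apply, two_nsmul, ← add_smul, invOf_two_add_invOf_two, one_smul]
  calc (2 * n.factorial) • wedgeTwo K ω v
      = alternatizeUncurryFin (n.factorial • (wedgeOne.flip ω ∘ₗ K)) v := by
        rw [alternatizeUncurryFin_smul, ← two_smul_wedgeTwo, mul_comm, mul_smul]
        rfl
    _ = alternatization f.uncurryLeft v := by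
        rw [alternatization_apply_eq_sum_curryLeft, alternatizeUncurryFin_apply]
        simp only [LinearMap.curry_uncurryLeft, alternatization_f]
        rfl
    _ = _ := alternatization_apply _ _

end Alternatization

section CurvaturePowers

open AlternatingMap

variable {R L A : Type*} [CommRing R] [LieRing L] [LieAlgebra R L] [Ring A] [Algebra R A]

/-- The action of `L` on the algebra `A` by the commutators with the elements `D x`. -/
def commutatorAction (D : L →ₗ[R] A) : L →ₗ[R] Module.End R A :=
  LinearMap.mul R A ∘ₗ D - (LinearMap.mul R A).flip ∘ₗ D

theorem commutatorAction_apply (D : L →ₗ[R] A) (x : L) (a : A) :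
    commutatorAction D x a = D x * a - a * D x :=
  rfl

variable [Invertible (2 : R)]

/-- The powers, for the wedge product, of a 2-form with values in an associative algebra. -/
def wedgePow (K : L →ₗ[R] L →ₗ[R] A) : (p : ℕ) → L [⋀^Fin (2 * p)]→ₗ[R] A
  | 0 => constOfIsEmpty R L (Fin 0) 1
  | p + 1 => wedgeTwo (K.compr₂ (LinearMap.mul R A)) (wedgePow K p)

-- The commutator with `D` is left multiplication by `D`, whose curvature is left multiplication by
-- the curvature of `D`, minus a right multiplication, which commutes with all left multiplications.
theorem covDiff_commutatorAction_wedgePow (D : L →ₗ[R] A) (p : ℕ) :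
    covDiff (commutatorAction D) (wedgePow (curvatureForm D) p) = 0 := by
  induction p with
  | zero =>
    refine ext_curryLeft fun x ↦ ?_
    ext v
    rw [curryLeft_covDiff_zero, lieDeriv_apply, adSubst_zero, sub_zero]
    simp [wedgePow, commutatorAction_apply]
  | succ p ih =>
    have commute (x y z : L) : Commute ((-((LinearMap.mul R A).flip ∘ₗ D)) x)
        (curvatureForm (LinearMap.mul R A ∘ₗ D) y z) := by
      rw [← curvatureForm_compr₂_lmul]
      exact Commute.neg_left (LinearMap.commute_mulLeft_right (R := R) _ (D x)).symm
    have split : commutatorAction D =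
        LinearMap.mul R A ∘ₗ D + -((LinearMap.mul R A).flip ∘ₗ D) :=
      LinearMap.ext fun x ↦ sub_eq_add_neg _ _
    rw [split] at ih ⊢
    rw [wedgePow, curvatureForm_compr₂_lmul, covDiff_add_wedgeTwo_curvatureForm commute, ih,
      _root_.map_zero]

end CurvaturePowers

section CochainDifferential

open AlternatingMap

theorem sum_sum_dite_lt {V : Type*} [AddCommMonoid V] {n : ℕ} (f : Fin n → Fin (n + 1) → V) :
    (∑ i : Fin (n + 1), ∑ j : Fin (n + 1),
      if h : (i : ℕ) < (j : ℕ) then f ⟨i, by have := j.isLt; omega⟩ j else 0) =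
      ∑ i : Fin n, ∑ j ≥ i, f i j.succ := by
  have last_eq_zero (j : Fin (n + 1)) : ¬(Fin.last n : ℕ) < j := j.le_last.not_gt
  rw [Fin.sum_univ_castSucc]
  simp only [last_eq_zero, dite_false, Finset.sum_const_zero, add_zero]
  refine Fintype.sum_congr _ _ fun i ↦ ?_
  rw [Fin.sum_univ_succ, ← Finset.filter_le_eq_Ici, Finset.sum_filter]
  simp

variable {R L V : Type*} [CommRing R] [LieRing L] [LieAlgebra R L] [AddCommGroup V] [Module R V]
  {n : ℕ}

theorem alternatizeUncurryFin_adSubst_flip_apply (ω : L [⋀^Fin (n + 1)]→ₗ[R] V)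
    (a : Fin (n + 2) → L) :
    alternatizeUncurryFin (adSubst.flip ω) a = 2 • ∑ i : Fin (n + 1), ∑ j ≥ i,
      (-1 : ℤ) ^ (i + j : ℕ) • ω (Fin.cons ⁅a i.castSucc, a j.succ⁆
        (j.removeNth (i.castSucc.removeNth a))) := by
  have adSubst_flip : adSubst.flip ω = alternatizeUncurryFinLM ∘ₗ
      (LieAlgebra.ad R L : L →ₗ[R] Module.End R L).compr₂ ω.curryLeft :=
    rfl
  rw [adSubst_flip, alternatizeUncurryFin_alternatizeUncurryFinLM_comp_apply, Finset.smul_sum]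
  refine Fintype.sum_congr _ _ fun i ↦ ?_
  rw [Finset.smul_sum]
  refine Finset.sum_congr rfl fun j _ ↦ ?_
  have skew : ω.curryLeft ⁅a j.succ, a i.castSucc⁆ = -ω.curryLeft ⁅a i.castSucc, a j.succ⁆ := by
    rw [← lie_skew, map_neg]
  simp only [LinearMap.compr₂_apply, LieHom.coe_toLinearMap, LieAlgebra.ad_apply, skew,
    AlternatingMap.neg_apply, sub_neg_eq_add, smul_add, two_smul]
  rfl

theorem dGen_coe [Invertible (2 : R)] (D : L →ₗ[R] Module.End R V) (ω : L [⋀^Fin n]→ₗ[R] V) :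
    dGen (fun x v ↦ D x v) ω = covDiff D ω := by
  ext a
  cases n with
  | zero =>
    have adSubst_flip : adSubst.flip ω = 0 := LinearMap.ext (adSubst_zero · ω)
    simp [dGen, covDiff_apply, adSubst_flip, wedgeOne_apply, alternatizeUncurryFin_apply,
      Subsingleton.elim (Fin.tail a) Fin.elim0]
  | succ n =>
    let f (i : Fin (n + 1)) (j : Fin (n + 2)) : V := (-1 : ℤ) ^ ((i : ℕ) + (j : ℕ)) •
      ω (Fin.cons ⁅a i.castSucc, a j⁆ fun k : Fin n ↦ a (j.succAbove (i.succAbove k)))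
    have f_succ {i j : Fin (n + 1)} (h : i ≤ j) : f i j.succ = -((-1 : ℤ) ^ (i + j : ℕ) •
        ω (Fin.cons ⁅a i.castSucc, a j.succ⁆ (j.removeNth (i.castSucc.removeNth a)))) := by
      have remove_swap : j.removeNth (i.castSucc.removeNth a) =
          i.removeNth (j.succ.removeNth a) := by
        rw [Fin.removeNth_removeNth_eq_swap, Fin.predAbove_castSucc_of_le _ _ h,
          Fin.succAbove_castSucc_of_le _ _ h]
      rw [remove_swap, ← neg_smul, ← mul_neg_one, ← pow_succ]
      rfl
    have half_two (v : V) : (⅟2 : R) • (2 : ℕ) • v = v := by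
      rw [two_nsmul, smul_add, invOf_two_smul_add_invOf_two_smul]
    rw [dGen, covDiff_apply, AlternatingMap.sub_apply,
      AlternatingMap.smul_apply, alternatizeUncurryFin_adSubst_flip_apply, half_two, wedgeOne_apply,
      alternatizeUncurryFin_apply, sub_eq_add_neg, ← Finset.sum_neg_distrib]
    congr 1
    refine (sum_sum_dite_lt f).trans (Fintype.sum_congr _ _ fun i ↦ ?_)
    rw [← Finset.sum_neg_distrib]
    exact Finset.sum_congr rfl fun j hj ↦ f_succ (Finset.mem_Ici.mp hj)

end CochainDifferential

section WedgePowers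

variable {L E : Type*} [AddCommGroup E] [Module ℝ E]

theorem wedge_cast {m n k : ℕ} (ω : (Fin m → L) → Module.End ℝ E)
    (η : (Fin n → L) → Module.End ℝ E) (h : m + n = k) (a : Fin k → L) :
    wedge ω η (fun i ↦ a (i.cast h)) = (m.factorial * n.factorial : ℝ)⁻¹ •
      ∑ τ : Equiv.Perm (Fin k), (Equiv.Perm.sign τ : ℤ) •
        (ω (fun i ↦ a (τ ((i.castAdd n).cast h))) * η fun j ↦ a (τ ((j.natAdd m).cast h))) := by
  subst h
  rfl

theorem wpow_eq_wedgePow [LieRing L] [LieAlgebra ℝ L] (K : L →ₗ[ℝ] L →ₗ[ℝ] Module.End ℝ E)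
    (p : ℕ) : wpow (fun v ↦ K (v 0) (v 1)) p = wedgePow K p := by
  induction p with
  | zero => rfl
  | succ p ih =>
    ext1 a
    have two_add_natAdd (k : Fin (2 * p)) :
        (k.natAdd 2).cast (by omega) = (k.succ.succ : Fin (2 * p + 2)) := by
      ext
      simp
    have factorial_ne_zero : (Nat.factorial 2 * (2 * p).factorial : ℝ) ≠ 0 := by positivity
    have wpow_succ : wpow (fun v ↦ K (v 0) (v 1)) (p + 1) a =
        wedge (fun v ↦ K (v 0) (v 1)) (wpow (fun v ↦ K (v 0) (v 1)) p)
          (fun i ↦ a (i.cast (Nat.add_comm 2 (2 * p)))) :=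
      rfl
    rw [wpow_succ, wedge_cast, ih, inv_smul_eq_iff₀ factorial_ne_zero, ← Nat.cast_mul,
      Nat.cast_smul_eq_nsmul, Nat.factorial_two, wedgePow, factorial_smul_wedgeTwo_apply]
    simp only [two_add_natAdd]
    rfl

end WedgePowers

section CommutatorTrace

variable {R C E : Type*} [CommRing R] [CommRing C] [Algebra R C] [AddCommGroup E] [Module R E]
  [Module C E] {δ : Derivation R C C} {T : Module.End R E}

theorem leibniz_eq_constr_add_sum (hT : ∀ (f : C) (e : E), T (f • e) = f • T e + δ f • e)
    {ι : Type*} [Fintype ι] (b : Basis ι C E) (e : E) :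
    T e = b.constr C (T ∘ b) e + ∑ i, δ (b.repr e i) • b i := by
  conv_lhs => rw [← b.sum_repr e]
  simp only [map_sum, hT, Finset.sum_add_distrib, b.constr_apply_fintype C, Function.comp_apply,
    b.equivFun_apply]

/-- The commutator of an operator satisfying the Leibniz rule with a `C`-linear endomorphism;
it is again `C`-linear. -/
def leibnizCommutator (hT : ∀ (f : C) (e : E), T (f • e) = f • T e + δ f • e)
    (g : Module.End C E) : Module.End C E where
  toFun e := T (g e) - g (T e)
  map_add' e e' := by simp only [map_add, add_sub_add_comm]
  map_smul' f e := by simp [hT, smul_sub]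

theorem leibnizCommutator_apply (hT : ∀ (f : C) (e : E), T (f • e) = f • T e + δ f • e)
    (g : Module.End C E) (e : E) : leibnizCommutator hT g e = T (g e) - g (T e) :=
  rfl

-- In a basis, `T` is the sum of a `C`-linear map, whose commutators have trace zero, and of the
-- coordinatewise `δ`, which vanishes on the basis.
theorem trace_leibnizCommutator [Module.Finite C E] [Module.Free C E]
    (hT : ∀ (f : C) (e : E), T (f • e) = f • T e + δ f • e) (g : Module.End C E) :
    LinearMap.trace C E (leibnizCommutator hT g) = δ (LinearMap.trace C E g) := by
  classical
  let b := Module.Free.chooseBasis C E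
  let A : Module.End C E := b.constr C (T ∘ b)
  have A_basis (j) : A (b j) = T (b j) := b.constr_basis C _ j
  let g' : Module.End C E := leibnizCommutator hT g - (A * g - g * A)
  have g'_basis (j) : g' (b j) = ∑ i, δ (b.repr (g (b j)) i) • b i := by
    have T_g_basis := leibniz_eq_constr_add_sum hT b (g (b j))
    simp only [g', LinearMap.sub_apply, Module.End.mul_apply, leibnizCommutator_apply, A_basis,
      T_g_basis, A]
    abel
  have trace_g' : LinearMap.trace C E g' = δ (LinearMap.trace C E g) := by
    simp only [LinearMap.trace_eq_matrix_trace C b, Matrix.trace, Matrix.diag,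
      LinearMap.toMatrix_apply, g'_basis, b.repr_sum_self]
    exact (map_sum δ _ _).symm
  rw [← trace_g', map_sub, map_sub, LinearMap.trace_mul_comm C A g, sub_self, sub_zero]

end CommutatorTrace

section Naturality

theorem dGen_map {L V W : Type*} [LieRing L] [AddCommGroup V] [AddCommGroup W] {act : L → V → V}
    {act' : L → W → W} (f : V →+ W) (hf : ∀ x v, f (act x v) = act' x (f v)) {n : ℕ}
    (ω : (Fin n → L) → V) : dGen act' (f ∘ ω) = f ∘ dGen act ω := by
  ext a
  cases n with
  | zero => simp [dGen, hf]
  | succ n => simp [dGen, hf, apply_dite f]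

variable {L E : Type*} [AddCommGroup E] [Module ℝ E] (S : Subalgebra ℝ (Module.End ℝ E))

theorem wedge_mem {m n : ℕ} {ω : (Fin m → L) → Module.End ℝ E} {η : (Fin n → L) → Module.End ℝ E}
    (hω : ∀ a, ω a ∈ S) (hη : ∀ a, η a ∈ S) (a : Fin (m + n) → L) : wedge ω η a ∈ S :=
  S.smul_mem (sum_mem fun _ _ ↦ zsmul_mem (mul_mem (hω _) (hη _)) _) _

theorem wpow_mem {ω : (Fin 2 → L) → Module.End ℝ E} (hω : ∀ a, ω a ∈ S) (p : ℕ)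
    (a : Fin (2 * p) → L) : wpow ω p a ∈ S := by
  induction p with
  | zero => exact S.one_mem
  | succ p ih => exact wedge_mem S hω ih fun i ↦ a (i.cast (Nat.add_comm 2 (2 * p)))

end Naturality

section ChernCharacter

variable {L C E : Type*} [LieRing L] [LieAlgebra ℝ L] [CommRing C] [Algebra ℝ C]
  [AddCommGroup E] [Module ℝ E] [Module C E]

theorem dEnd_wpow_curv2 (D : L →ₗ[ℝ] Module.End ℝ E) (p : ℕ) : dEnd D (wpow (curv2 D) p) = 0 :=
  calc dEnd D (wpow (curv2 D) p)
      = dEnd D (wedgePow (curvatureForm D) p) :=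
        congrArg (dEnd D) (wpow_eq_wedgePow (curvatureForm D) p)
    _ = covDiff (commutatorAction D) (wedgePow (curvatureForm D) p) :=
        dGen_coe (commutatorAction D) _
    _ = 0 := by rw [covDiff_commutatorAction_wedgePow]; rfl

theorem IsConn.curv_smul {ρ : L →ₗ[ℝ] Derivation ℝ C C}
    (hρ : ∀ (a b : L) (f : C), ρ ⁅a, b⁆ f = ρ a (ρ b f) - ρ b (ρ a f))
    {D : L →ₗ[ℝ] Module.End ℝ E} (hD : IsConn ρ D) (a b : L) (f : C) (e : E) :
    curv D a b (f • e) = f • curv D a b e := by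
  simp only [curv, LinearMap.sub_apply, Module.End.mul_apply, hD _ _ _, map_add, hρ, sub_smul,
    smul_sub]
  abel

variable [IsScalarTower ℝ C E]

theorem trR_restrictScalars_s4 (g : Module.End C E) :
    trR C (g.restrictScalars ℝ) = LinearMap.trace C E g := by
  have exists_linear : ∃ g' : E →ₗ[C] E, ⇑g' = ⇑(g.restrictScalars ℝ) := ⟨g, rfl⟩
  rw [trR, dif_pos exists_linear]
  exact congrArg _ (DFunLike.coe_injective exists_linear.choose_spec)

theorem IsConn.exists_restrictScalars_eq_wpow_curv2 {ρ : L →ₗ[ℝ] Derivation ℝ C C}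
    (hρ : ∀ (a b : L) (f : C), ρ ⁅a, b⁆ f = ρ a (ρ b f) - ρ b (ρ a f))
    {D : L →ₗ[ℝ] Module.End ℝ E} (hD : IsConn ρ D) (p : ℕ) (a : Fin (2 * p) → L) :
    ∃ g : Module.End C E, g.restrictScalars ℝ = wpow (curv2 D) p a := by
  let restrict : Module.End C E →ₐ[ℝ] Module.End ℝ E :=
    AlgHom.ofLinearMap (LinearMap.restrictScalarsₗ ℝ C E E ℝ) rfl fun _ _ ↦ rfl
  refine wpow_mem restrict.range (fun v ↦ ?_) p a
  exact ⟨{ curv D (v 0) (v 1) with map_smul' := hD.curv_smul hρ (v 0) (v 1) }, rfl⟩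

theorem stmt4_general [Module.Finite C E] [Module.Free C E] (ρ : L →ₗ[ℝ] Derivation ℝ C C)
    (hρ : ∀ (a b : L) (f : C), ρ ⁅a, b⁆ f = ρ a (ρ b f) - ρ b (ρ a f))
    (D : L →ₗ[ℝ] Module.End ℝ E) (hD : IsConn ρ D) (p : ℕ) : dRho ρ (chp C D p) = 0 := by
  choose g hg using hD.exists_restrictScalars_eq_wpow_curv2 hρ p
  let act (a : L) : Module.End C E → Module.End C E := leibnizCommutator (hD a)
  let restrict : Module.End C E →+ Module.End ℝ E :=
    (LinearMap.restrictScalarsₗ ℝ C E E ℝ).toAddMonoidHom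
  have chp_eq : chp C D p = (LinearMap.trace C E).toAddMonoidHom ∘ g :=
    funext fun a ↦ by rw [chp, ← hg, trR_restrictScalars_s4]; rfl
  have restrict_dGen : restrict ∘ dGen act g = 0 := by
    rw [← dEnd_wpow_curv2 D p, ← funext hg]
    exact (dGen_map restrict (fun _ _ ↦ rfl) g).symm
  have dGen_g : dGen act g = 0 :=
    funext fun a ↦ LinearMap.restrictScalars_injective ℝ (congrFun restrict_dGen a)
  calc dRho ρ (chp C D p)
      = (LinearMap.trace C E).toAddMonoidHom ∘ dGen act g := by
        rw [chp_eq]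
        exact dGen_map _ (fun a g ↦ trace_leibnizCommutator (hD a) g) g
    _ = 0 := by
        rw [dGen_g]
        exact funext fun _ ↦ map_zero _

end ChernCharacter

/-- the Chern character form `ch_p(∇)` is closed. -/
theorem stmt4 {L : Type*} {C : Type*} {E : Type*}
    [LieRing L] [LieAlgebra ℝ L] [CommRing C] [Algebra ℝ C] [Module C L]
    [AddCommGroup E] [Module ℝ E] [Module C E] [IsScalarTower ℝ C E]
    [Module.Finite C E] [Module.Free C E]
    (ρ : L →ₗ[ℝ] Derivation ℝ C C)
    (hρ : ∀ (a b : L) (f : C), ρ ⁅a, b⁆ f = ρ a (ρ b f) - ρ b (ρ a f))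
    (hLeib : ∀ (a b : L) (f : C), ⁅a, f • b⁆ = f • ⁅a, b⁆ + ρ a f • b)
    (D : L →ₗ[ℝ] Module.End ℝ E) (hD : IsConn ρ D) (p : ℕ) (hp : 1 ≤ p) :
    dRho ρ (chp C D p) = 0 :=
  stmt4_general ρ hρ D hD p
end

section
/- For any two ℝ-linear connections ∇⁰, ∇¹ of L on E and every p ≥ 1: d_ρ(cs_p(∇⁰,∇¹)) = ch_p(∇¹) − ch_p(∇⁰) (the Chern–Simons transgression formula for a pair of ℝ-linear connections). -/
open Module

/-!
Forms of all degrees are treated together as functions on lists of arguments, a ring under the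
shuffle product whose differential is determined by Cartan's formula `d ι_a + ι_a d = 𝓛_a`. In this
ring `d_t λ` is the derivative in `t` of the curvature `R_t` of `∇ᵗ = ∇⁰ + tλ`, where `d_t` is the
differential twisted by `∇ᵗ`. Cyclicity of the trace and the Bianchi identity `d_t R_t = 0` give
`d/dt Tr(R_t ^ p) = p Tr(d_t λ ∧ R_t ^ (p - 1)) = p Tr(d_t (λ ∧ R_t ^ (p - 1)))`, which is
`d_ρ (p Tr(λ ∧ R_t ^ (p - 1)))` because the trace intertwines `d_t` and `d_ρ`. Integrate over
`[0, 1]`. All families are polynomial in `t`, so the integral is purely algebraic.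
-/

theorem sum_perm_eq_sum_cycleRange {V : Type*} [AddCommMonoid V] {n : ℕ}
    (F : Equiv.Perm (Fin (n + 1)) → V) :
    ∑ τ, F τ = ∑ i : Fin (n + 1), ∑ σ : Equiv.Perm (Fin n),
      F (i.cycleRange.symm * Equiv.Perm.decomposeFin.symm (0, σ)) := by
  rw [← Fintype.sum_prod_type']
  symm
  refine Fintype.sum_bijective (fun x : Fin (n + 1) × Equiv.Perm (Fin n) =>
    x.1.cycleRange.symm * Equiv.Perm.decomposeFin.symm (0, x.2)) ?_ _ _ fun _ => rfl
  refine (Fintype.bijective_iff_injective_and_card _).2 ⟨?_, ?_⟩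
  · rintro ⟨i, σ⟩ ⟨i', σ'⟩ h
    have image_zero := DFunLike.congr_fun h 0
    obtain rfl : i = i' := by simpa using image_zero
    simpa using h
  · simp [Fintype.card_perm, Nat.factorial_succ]

/-! ### Cochains and the shuffle product -/

/-- Cochains on `L` with values in `V`, all degrees at once: a cochain is evaluated on lists of
elements of `L`, and an `n`-form is a cochain that is only of interest on lists of length `n`.
Lists make contraction structural, so that the products and differentials below can be defined
by recursion from Cartan's formulas. -/
def Cochain (L V : Type*) := List L → V

namespace Cochain

variable {k L V W B B' : Type*}

@[ext] theorem ext {f g : Cochain L V} (h : ∀ l, f l = g l) : f = g := funext h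

section Basic

variable [AddCommGroup V]

instance : AddCommGroup (Cochain L V) := inferInstanceAs (AddCommGroup (List L → V))

instance [CommRing k] [Module k V] : Module k (Cochain L V) :=
  inferInstanceAs (Module k (List L → V))

theorem add_apply (f g : Cochain L V) (l : List L) : (f + g) l = f l + g l := rfl

theorem sub_apply (f g : Cochain L V) (l : List L) : (f - g) l = f l - g l := rfl

theorem neg_apply (f : Cochain L V) (l : List L) : (-f) l = -f l := rfl

theorem zero_apply (l : List L) : (0 : Cochain L V) l = 0 := rfl

theorem smul_apply [CommRing k] [Module k V] (c : k) (f : Cochain L V) (l : List L) :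
    (c • f) l = c • f l := rfl

/-- The contraction `ι_a`, which inserts `a` as the first argument. -/
def contract (a : L) : Cochain L V →+ Cochain L V where
  toFun f l := f (a :: l)
  map_zero' := rfl
  map_add' _ _ := rfl

theorem contract_apply (a : L) (f : Cochain L V) (l : List L) : contract a f l = f (a :: l) := rfl

theorem contract_smul [CommRing k] [Module k V] (c : k) (a : L) (f : Cochain L V) :
    contract a (c • f) = c • contract a f := rfl

/-- The grading involution, acting on forms of degree `n` by `(-1) ^ n`. -/
def parity : Cochain L V →+ Cochain L V where
  toFun f l := (-1 : ℤ) ^ l.length • f l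
  map_zero' := ext fun _ => smul_zero _
  map_add' _ _ := ext fun _ => smul_add _ _ _

theorem parity_apply (f : Cochain L V) (l : List L) :
    parity f l = (-1 : ℤ) ^ l.length • f l := rfl

theorem parity_smul [CommRing k] [Module k V] (c : k) (f : Cochain L V) :
    parity (c • f) = c • parity f :=
  ext fun _ => smul_comm _ c _

theorem contract_parity (a : L) (f : Cochain L V) :
    contract a (parity f) = -parity (contract a f) := by
  ext l
  simp only [contract_apply, parity_apply, neg_apply, List.length_cons, pow_succ, mul_neg, mul_one,
    neg_smul]

theorem parity_parity (f : Cochain L V) : parity (parity f) = f := by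
  ext l
  simp only [parity_apply, smul_smul, ← mul_pow, neg_mul_neg, one_mul, one_pow, one_smul]

theorem parity_contract_of_even {f : Cochain L V} (hf : parity f = f) (a : L) :
    parity (contract a f) = -contract a f := by
  rw [← neg_eq_iff_eq_neg, ← contract_parity, hf]

theorem parity_contract_of_odd {f : Cochain L V} (hf : parity f = -f) (a : L) :
    parity (contract a f) = contract a f := by
  rw [← neg_inj, ← contract_parity, hf, map_neg]

end Basic

section Ring

variable [Ring B]

/-- The shuffle product evaluated on a list, by recursion from the fact that contractions are
graded derivations: `ι_a (f * g) = ι_a f * g + (-1) ^ |f| f * ι_a g`. -/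
def shuffle : List L → Cochain L B →+ Cochain L B →+ B
  | [] => (AddMonoidHom.mul.comp (Pi.evalAddMonoidHom (fun _ => B) [])).compl₂
      (Pi.evalAddMonoidHom (fun _ => B) [])
  | a :: l => (shuffle l).comp (contract a) + ((shuffle l).comp parity).compl₂ (contract a)

instance : Mul (Cochain L B) := ⟨fun f g l => shuffle l f g⟩

instance : One (Cochain L B) := ⟨fun l => if l = [] then 1 else 0⟩

theorem mul_nil (f g : Cochain L B) : (f * g) [] = f [] * g [] := rfl

theorem contract_mul (a : L) (f g : Cochain L B) :
    contract a (f * g) = contract a f * g + parity f * contract a g := rfl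

theorem mul_cons (f g : Cochain L B) (a : L) (l : List L) :
    (f * g) (a :: l) = (contract a f * g) l + (parity f * contract a g) l := rfl

theorem one_nil : (1 : Cochain L B) [] = 1 := rfl

theorem contract_one (a : L) : contract a (1 : Cochain L B) = 0 := rfl

theorem parity_one : parity (1 : Cochain L B) = 1 := by
  ext l
  cases l with
  | nil => exact one_smul ℤ _
  | cons a l => exact smul_zero _

instance : NonUnitalNonAssocRing (Cochain L B) where
  mul_zero f := ext fun l => map_zero (shuffle l f)
  zero_mul g := ext fun l => DFunLike.congr_fun (map_zero (shuffle l)) g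
  left_distrib f g h := ext fun l => map_add (shuffle l f) g h
  right_distrib f g h := ext fun l => DFunLike.congr_fun (map_add (shuffle l) f g) h

theorem parity_mul (f g : Cochain L B) : parity (f * g) = parity f * parity g := by
  ext l
  induction l generalizing f g with
  | nil => simp only [parity_apply, mul_nil, List.length_nil, pow_zero, one_smul]
  | cons a l ih =>
    change contract a (parity (f * g)) l = _
    rw [contract_parity, contract_mul, map_add, mul_cons, contract_parity, contract_parity,
      parity_parity]
    simp only [neg_apply, add_apply, ih, parity_parity, neg_mul, mul_neg]
    abel

protected theorem one_mul (f : Cochain L B) : 1 * f = f := by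
  ext l
  induction l generalizing f with
  | nil => rw [mul_nil, one_nil, _root_.one_mul]
  | cons a l ih =>
    rw [mul_cons, contract_one, zero_mul, parity_one, ih, zero_apply, zero_add, contract_apply]

protected theorem mul_one (f : Cochain L B) : f * 1 = f := by
  ext l
  induction l generalizing f with
  | nil => rw [mul_nil, one_nil, _root_.mul_one]
  | cons a l ih =>
    rw [mul_cons, contract_one, mul_zero, ih, zero_apply, add_zero, contract_apply]

protected theorem mul_assoc (f g h : Cochain L B) : f * g * h = f * (g * h) := by
  ext l
  induction l generalizing f g h with
  | nil => simp only [mul_nil, _root_.mul_assoc]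
  | cons a l ih =>
    rw [mul_cons, mul_cons]
    simp only [contract_mul, parity_mul, add_mul, mul_add, add_apply, ih]
    abel

instance : Ring (Cochain L B) where
  __ := (inferInstance : NonUnitalNonAssocRing (Cochain L B))
  one_mul := Cochain.one_mul
  mul_one := Cochain.mul_one
  mul_assoc := Cochain.mul_assoc

theorem parity_pow_of_even {f : Cochain L B} (hf : parity f = f) (n : ℕ) :
    parity (f ^ n) = f ^ n := by
  induction n with
  | zero => rw [pow_zero, parity_one]
  | succ n ih => rw [pow_succ, parity_mul, ih, hf]

variable [CommRing k] [Algebra k B]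

protected theorem smul_mul (c : k) (f g : Cochain L B) : c • f * g = c • (f * g) := by
  ext l
  induction l generalizing f g with
  | nil => simp only [mul_nil, smul_apply, smul_mul_assoc]
  | cons a l ih =>
    simp only [smul_apply, mul_cons, contract_smul, parity_smul, ih, smul_add]

protected theorem mul_smul (c : k) (f g : Cochain L B) : f * c • g = c • (f * g) := by
  ext l
  induction l generalizing f g with
  | nil => simp only [mul_nil, smul_apply, mul_smul_comm]
  | cons a l ih =>
    simp only [smul_apply, mul_cons, contract_smul, ih, smul_add]

instance : Algebra k (Cochain L B) := Algebra.ofModule Cochain.smul_mul Cochain.mul_smul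

end Ring

section MapValues

variable [CommRing k] [AddCommGroup V] [Module k V] [AddCommGroup W] [Module k W]

/-- The cochain map `T_*` applying the linear map `T` valuewise. -/
def mapValues (T : V →ₗ[k] W) : Cochain L V →ₗ[k] Cochain L W := T.compLeft (List L)

theorem mapValues_apply (T : V →ₗ[k] W) (f : Cochain L V) (l : List L) :
    mapValues T f l = T (f l) := rfl

theorem contract_mapValues (T : V →ₗ[k] W) (a : L) (f : Cochain L V) :
    contract a (mapValues T f) = mapValues T (contract a f) := rfl

theorem parity_mapValues (T : V →ₗ[k] W) (f : Cochain L V) :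
    parity (mapValues T f) = mapValues T (parity f) :=
  ext fun _ => (map_zsmul T _ _).symm

variable [Ring B] [Algebra k B] [Ring B'] [Algebra k B']

theorem mapValues_mul (φ : B →ₐ[k] B') (f g : Cochain L B) :
    mapValues φ.toLinearMap (f * g) = mapValues φ.toLinearMap f * mapValues φ.toLinearMap g := by
  ext l
  induction l generalizing f g with
  | nil => exact map_mul φ _ _
  | cons a l ih =>
    rw [mul_cons, contract_mapValues, contract_mapValues, parity_mapValues, ← ih, ← ih,
      ← add_apply, ← map_add, ← contract_mul]
    rfl

theorem mapValues_pow (φ : B →ₐ[k] B') (f : Cochain L B) (n : ℕ) :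
    mapValues φ.toLinearMap (f ^ n) = mapValues φ.toLinearMap f ^ n := by
  induction n with
  | zero =>
    ext l
    cases l with
    | nil => exact map_one φ
    | cons a l => exact map_zero φ
  | succ n ih => rw [pow_succ, mapValues_mul, ih, pow_succ]

section Trace

variable {T : B →ₗ[k] V}

/-- Contraction exchanges even and odd cochains, so the two parities have to be treated in a
single induction. -/
theorem map_mul_apply_comm_of_parity (hT : ∀ x y, T (x * y) = T (y * x)) (l : List L) :
    (∀ f g : Cochain L B, parity f = f → T ((f * g) l) = T ((g * f) l)) ∧
    (∀ f g : Cochain L B, parity f = -f → T ((f * g) l) = T ((parity g * f) l)) := by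
  induction l with
  | nil => constructor <;> intro f g _ <;> simp [mul_nil, parity_apply, hT (f []) (g [])]
  | cons a l ih =>
    constructor <;> intro f g hf
    · rw [mul_cons, mul_cons, map_add, map_add, ih.2 _ _ (parity_contract_of_even hf a), hf,
        ih.1 _ _ hf, add_comm]
    · rw [mul_cons, mul_cons, map_add, map_add, ih.1 _ _ (parity_contract_of_odd hf a), hf,
        parity_parity, contract_parity, neg_mul, neg_mul, neg_apply, neg_apply, map_neg, map_neg,
        ih.2 _ _ hf, add_comm]

theorem mapValues_mul_comm_of_even (hT : ∀ x y, T (x * y) = T (y * x)) {f : Cochain L B}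
    (hf : parity f = f) (g : Cochain L B) :
    mapValues T (f * g) = mapValues T (g * f) :=
  ext fun l => (map_mul_apply_comm_of_parity hT l).1 f g hf

/-- The trace of the formal derivative of `f ^ (n + 1)` in the direction `f'`. -/
theorem mapValues_sum_pow_mul_pow (hT : ∀ x y, T (x * y) = T (y * x)) {f : Cochain L B}
    (hf : parity f = f) (f' : Cochain L B) (n : ℕ) :
    mapValues T (∑ i ∈ Finset.range (n + 1), f ^ i * f' * f ^ (n - i)) =
      (n + 1) • mapValues T (f' * f ^ n) := by
  have cyclic : ∀ i ∈ Finset.range (n + 1),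
      mapValues T (f ^ i * f' * f ^ (n - i)) = mapValues T (f' * f ^ n) := by
    intro i hi
    rw [mul_assoc, mapValues_mul_comm_of_even hT (parity_pow_of_even hf i), mul_assoc, ← pow_add,
      Nat.sub_add_cancel (Nat.le_of_lt_succ (Finset.mem_range.1 hi))]
  rw [map_sum, Finset.sum_congr rfl cyclic, Finset.sum_const, Finset.card_range]

end Trace

end MapValues

/-! ### Homogeneous and skew-symmetric cochains -/

section Grading

variable [AddCommGroup V]

/-- Cochains supported on lists of length `n`. -/
def IsHomogeneous (n : ℕ) (f : Cochain L V) : Prop := ∀ l : List L, l.length ≠ n → f l = 0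

/-- Cochains changing sign when two adjacent arguments are exchanged. -/
def IsSkew (f : Cochain L V) : Prop :=
  ∀ (u : List L) (a b : L) (v : List L), f (u ++ a :: b :: v) = -f (u ++ b :: a :: v)

theorem IsHomogeneous.ext {n : ℕ} {f g : Cochain L V} (hf : IsHomogeneous n f)
    (hg : IsHomogeneous n g) (h : ∀ l : List L, l.length = n → f l = g l) : f = g := by
  ext l
  by_cases hl : l.length = n
  · exact h l hl
  · rw [hf l hl, hg l hl]

theorem IsHomogeneous.add {n : ℕ} {f g : Cochain L V} (hf : IsHomogeneous n f)
    (hg : IsHomogeneous n g) : IsHomogeneous n (f + g) := fun l hl => by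
  rw [add_apply, hf l hl, hg l hl, add_zero]

theorem IsHomogeneous.smul [CommRing k] [Module k V] {n : ℕ} {f : Cochain L V}
    (hf : IsHomogeneous n f) (c : k) : IsHomogeneous n (c • f) := fun l hl => by
  rw [smul_apply, hf l hl, smul_zero]

theorem IsHomogeneous.contract {n : ℕ} {f : Cochain L V} (hf : IsHomogeneous (n + 1) f) (a : L) :
    IsHomogeneous n (contract a f) :=
  fun l hl => hf (a :: l) (by simpa using hl)

theorem IsHomogeneous.contract_eq_zero {f : Cochain L V} (hf : IsHomogeneous 0 f) (a : L) :
    Cochain.contract a f = 0 :=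
  Cochain.ext fun l => hf (a :: l) (by simp)

theorem IsHomogeneous.parity_eq {n : ℕ} {f : Cochain L V} (hf : IsHomogeneous n f) :
    Cochain.parity f = (-1 : ℤ) ^ n • f := by
  ext l
  change (-1 : ℤ) ^ l.length • f l = (-1 : ℤ) ^ n • f l
  by_cases hl : l.length = n
  · rw [hl]
  · rw [hf l hl, smul_zero, smul_zero]

theorem IsHomogeneous.parity {n : ℕ} {f : Cochain L V} (hf : IsHomogeneous n f) :
    IsHomogeneous n (parity f) := fun l hl => by
  rw [parity_apply, hf l hl, smul_zero]

theorem IsHomogeneous.mul [Ring B] {m n : ℕ} {f g : Cochain L B} (hf : IsHomogeneous m f)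
    (hg : IsHomogeneous n g) : IsHomogeneous (m + n) (f * g) := by
  intro l hl
  induction l generalizing m n f g with
  | nil =>
    rw [mul_nil]
    rcases Nat.eq_zero_or_pos m with rfl | hm
    · rw [hg [] (by simpa using hl), mul_zero]
    · rw [hf [] hm.ne, zero_mul]
  | cons a l ih =>
    have left : (Cochain.contract a f * g) l = 0 := by
      cases m with
      | zero => rw [hf.contract_eq_zero, zero_mul, zero_apply]
      | succ m => exact ih (hf.contract a) hg (by simp only [List.length_cons] at hl; omega)
    have right : (Cochain.parity f * Cochain.contract a g) l = 0 := by
      cases n with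
      | zero => rw [hg.contract_eq_zero, mul_zero, zero_apply]
      | succ n => exact ih hf.parity (hg.contract a) (by simp only [List.length_cons] at hl; omega)
    rw [mul_cons, left, right, add_zero]

theorem IsHomogeneous.mapValues [CommRing k] [Module k V] [AddCommGroup W] [Module k W] {n : ℕ}
    {f : Cochain L V} (hf : IsHomogeneous n f) (T : V →ₗ[k] W) : IsHomogeneous n (mapValues T f) :=
  fun l hl => (congrArg T (hf l hl)).trans (map_zero T)

theorem IsSkew.contract_contract {f : Cochain L V} (hf : IsSkew f) (a b : L) :
    Cochain.contract a (Cochain.contract b f) = -Cochain.contract b (Cochain.contract a f) :=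
  ext fun l => hf [] b a l

theorem IsSkew.contract {f : Cochain L V} (hf : IsSkew f) (a : L) : IsSkew (contract a f) :=
  fun u => hf (a :: u)

theorem IsSkew.parity {f : Cochain L V} (hf : IsSkew f) : IsSkew (parity f) := by
  intro u a b v
  simp only [parity_apply, hf u a b v, smul_neg, List.length_append, List.length_cons]

theorem IsSkew.mapValues [CommRing k] [Module k V] [AddCommGroup W] [Module k W]
    {f : Cochain L V} (hf : IsSkew f) (T : V →ₗ[k] W) : IsSkew (mapValues T f) :=
  fun u a b v => (congrArg T (hf u a b v)).trans (map_neg T _)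

theorem IsSkew.smul [CommRing k] [Module k V] {f : Cochain L V} (hf : IsSkew f) (c : k) :
    IsSkew (c • f) :=
  fun u a b v => by rw [smul_apply, smul_apply, hf, smul_neg]

theorem IsSkew.mul [Ring B] {f g : Cochain L B} (hf : IsSkew f) (hg : IsSkew g) :
    IsSkew (f * g) := by
  intro u a b v
  induction u generalizing f g with
  | nil =>
    simp only [List.nil_append, mul_cons, contract_parity, parity_parity,
      hf.contract_contract a b, hg.contract_contract a b, neg_mul, mul_neg, neg_apply]
    abel
  | cons c u ih =>
    rw [List.cons_append, List.cons_append, mul_cons, mul_cons, ih (hf.contract c) hg,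
      ih hf.parity (hg.contract c), neg_add]

theorem isSkew_one [Ring B] : IsSkew (1 : Cochain L B) := by
  intro u a b v
  cases u <;> exact neg_zero.symm

theorem IsSkew.pow [Ring B] {f : Cochain L B} (hf : IsSkew f) (n : ℕ) : IsSkew (f ^ n) := by
  induction n with
  | zero => rw [pow_zero]; exact isSkew_one
  | succ n ih => rw [pow_succ]; exact ih.mul hf

end Grading

/-! ### The Lie derivative and the differential -/

section Cartan

variable [CommRing k] [LieRing L] [AddCommGroup V] [Module k V] [AddCommGroup W] [Module k W]

variable (k) in
/-- Evaluation of cochains on a list. -/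
def eval (l : List L) : Cochain L V →ₗ[k] V := LinearMap.proj l

variable (k) in
/-- The contraction `ι_a` as a `k`-linear map. -/
def contractₗ (a : L) : Cochain L V →ₗ[k] Cochain L V where
  toFun := contract a
  map_add' := map_add (contract a)
  map_smul' c := contract_smul c a

/-- The Lie derivative evaluated on a list, by recursion from `[L_a, ι_b] = ι_[a, b]`. -/
def lieDerivAux (δ : L → Module.End k V) (a : L) : List L → Cochain L V →ₗ[k] V
  | [] => δ a ∘ₗ eval k []
  | b :: l => lieDerivAux δ a l ∘ₗ contractₗ k b - eval k (⁅a, b⁆ :: l)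

/-- The Lie derivative `L_a` of cochains, for an arbitrary operation `δ` of `L` on the values. -/
def lieDeriv (δ : L → Module.End k V) (a : L) : Cochain L V →ₗ[k] Cochain L V :=
  LinearMap.pi (lieDerivAux δ a)

/-- The differential evaluated on a list, by recursion from `ι_a ∘ d + d ∘ ι_a = L_a`. -/
def dAux (δ : L → Module.End k V) : List L → Cochain L V →ₗ[k] V
  | [] => 0
  | a :: l => lieDerivAux δ a l - dAux δ l ∘ₗ contractₗ k a

/-- The Chevalley–Eilenberg differential of cochains, for an arbitrary operation `δ` of `L` on
the values. -/
def d (δ : L → Module.End k V) : Cochain L V →ₗ[k] Cochain L V := LinearMap.pi (dAux δ)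

variable (δ : L → Module.End k V)

theorem lieDeriv_nil (a : L) (f : Cochain L V) : lieDeriv δ a f [] = δ a (f []) := rfl

theorem lieDeriv_cons (a b : L) (f : Cochain L V) (l : List L) :
    lieDeriv δ a f (b :: l) = lieDeriv δ a (contract b f) l - f (⁅a, b⁆ :: l) := rfl

theorem contract_lieDeriv (a b : L) (f : Cochain L V) :
    contract b (lieDeriv δ a f) = lieDeriv δ a (contract b f) - contract ⁅a, b⁆ f := rfl

theorem d_nil (f : Cochain L V) : d δ f [] = 0 := rfl

theorem d_cons (a : L) (f : Cochain L V) (l : List L) :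
    d δ f (a :: l) = lieDeriv δ a f l - d δ (contract a f) l := rfl

theorem contract_d (a : L) (f : Cochain L V) :
    contract a (d δ f) = lieDeriv δ a f - d δ (contract a f) := rfl

theorem IsHomogeneous.lieDeriv {n : ℕ} {f : Cochain L V} (hf : IsHomogeneous n f) (a : L) :
    IsHomogeneous n (lieDeriv δ a f) := by
  intro l hl
  induction l generalizing n f with
  | nil => rw [lieDeriv_nil, hf [] hl, map_zero]
  | cons b l ih =>
    rw [lieDeriv_cons, hf (⁅a, b⁆ :: l) hl, sub_zero]
    cases n with
    | zero => rw [hf.contract_eq_zero, map_zero, zero_apply]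
    | succ n => exact ih (hf.contract b) (by simpa using hl)

theorem IsHomogeneous.d {n : ℕ} {f : Cochain L V} (hf : IsHomogeneous n f) :
    IsHomogeneous (n + 1) (d δ f) := by
  intro l hl
  induction l generalizing n f with
  | nil => rfl
  | cons a l ih =>
    rw [d_cons, hf.lieDeriv δ a l (by simpa using hl), zero_sub, neg_eq_zero]
    cases n with
    | zero => rw [hf.contract_eq_zero, map_zero, zero_apply]
    | succ n => exact ih (hf.contract a) (by simpa using hl)

theorem lieDeriv_parity (a : L) (f : Cochain L V) :
    lieDeriv δ a (parity f) = parity (lieDeriv δ a f) := by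
  ext l
  induction l generalizing f with
  | nil => simp only [lieDeriv_nil, parity_apply, List.length_nil, pow_zero, one_smul]
  | cons b l ih =>
    change contract b (lieDeriv δ a (parity f)) l = contract b (parity (lieDeriv δ a f)) l
    rw [contract_lieDeriv, contract_parity, contract_parity, contract_parity,
      contract_lieDeriv]
    simp only [map_neg, map_sub, sub_apply, neg_apply, ih]
    abel

theorem d_parity (f : Cochain L V) : d δ (parity f) = -parity (d δ f) := by
  ext l
  induction l generalizing f with
  | nil => simp only [d_nil, neg_apply, parity_apply, smul_zero, neg_zero]
  | cons a l ih =>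
    change contract a (d δ (parity f)) l = contract a (-parity (d δ f)) l
    rw [contract_d, map_neg, contract_parity, contract_parity,
      contract_d, neg_neg, lieDeriv_parity]
    simp only [map_neg, map_sub, sub_apply, neg_apply, ih, neg_neg]

variable {δ} in
theorem mapValues_lieDeriv {δ' : L → Module.End k W} {T : V →ₗ[k] W}
    (hT : ∀ a x, T (δ a x) = δ' a (T x)) (a : L) (f : Cochain L V) :
    mapValues T (lieDeriv δ a f) = lieDeriv δ' a (mapValues T f) := by
  ext l
  induction l generalizing f with
  | nil => exact hT a _
  | cons b l ih =>
    rw [lieDeriv_cons, contract_mapValues, ← ih, mapValues_apply, lieDeriv_cons, map_sub]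
    rfl

variable {δ} in
theorem mapValues_d {δ' : L → Module.End k W} {T : V →ₗ[k] W}
    (hT : ∀ a x, T (δ a x) = δ' a (T x)) (f : Cochain L V) :
    mapValues T (d δ f) = d δ' (mapValues T f) := by
  ext l
  induction l generalizing f with
  | nil => exact map_zero T
  | cons a l ih =>
    rw [d_cons, contract_mapValues, ← ih, mapValues_apply, d_cons, map_sub,
      ← mapValues_lieDeriv hT]
    rfl

end Cartan

section Leibniz

variable [CommRing k] [LieRing L] [Ring B] [Algebra k B] {δ : L → Module.End k B}

theorem lieDeriv_mul (hδ : ∀ a x y, δ a (x * y) = δ a x * y + x * δ a y) (a : L)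
    (f g : Cochain L B) :
    lieDeriv δ a (f * g) = lieDeriv δ a f * g + f * lieDeriv δ a g := by
  ext l
  induction l generalizing f g with
  | nil => simp only [lieDeriv_nil, add_apply, mul_nil, hδ]
  | cons b l ih =>
    change contract b (lieDeriv δ a (f * g)) l =
      contract b (lieDeriv δ a f * g + f * lieDeriv δ a g) l
    rw [contract_lieDeriv, map_add, contract_mul, contract_mul,
      contract_mul, contract_mul, contract_lieDeriv, contract_lieDeriv, ← lieDeriv_parity]
    simp only [map_add, sub_apply, add_apply, ih, sub_mul, mul_sub]
    abel

theorem d_mul (hδ : ∀ a x y, δ a (x * y) = δ a x * y + x * δ a y) (f g : Cochain L B) :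
    d δ (f * g) = d δ f * g + parity f * d δ g := by
  ext l
  induction l generalizing f g with
  | nil => simp only [d_nil, add_apply, mul_nil, zero_mul, mul_zero, add_zero]
  | cons a l ih =>
    change contract a (d δ (f * g)) l = contract a (d δ f * g + parity f * d δ g) l
    rw [contract_d, map_add, contract_mul, contract_mul,
      contract_mul, contract_d, contract_d, contract_parity, parity_parity, lieDeriv_mul hδ]
    simp only [map_add, sub_apply, add_apply, ih, d_parity, parity_parity, sub_mul, mul_sub,
      neg_mul, neg_apply]
    abel

theorem d_one (hδ : ∀ a x y, δ a (x * y) = δ a x * y + x * δ a y) :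
    d δ (1 : Cochain L B) = 0 := by
  have h := d_mul hδ 1 1
  rwa [parity_one, mul_one, mul_one, one_mul, left_eq_add] at h

theorem d_pow_eq_zero (hδ : ∀ a x y, δ a (x * y) = δ a x * y + x * δ a y)
    {f : Cochain L B} (hf : d δ f = 0) (n : ℕ) : d δ (f ^ n) = 0 := by
  induction n with
  | zero => rw [pow_zero, d_one hδ]
  | succ n ih => rw [pow_succ, d_mul hδ, ih, hf, zero_mul, mul_zero, add_zero]

end Leibniz

section LowDegree

variable [AddCommGroup V] [Ring B]

/-- The cochain of degree one with values `φ a` on `[a]`. -/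
def ofUnary (φ : L → V) : Cochain L V
  | [a] => φ a
  | _ => 0

/-- The cochain of degree two with values `ω a b` on `[a, b]`. -/
def ofBinary (ω : L → L → V) : Cochain L V
  | [a, b] => ω a b
  | _ => 0

theorem isHomogeneous_ofUnary (φ : L → V) : IsHomogeneous 1 (ofUnary φ) := by
  rintro (_ | ⟨a, _ | ⟨b, l⟩⟩) hl
  · rfl
  · exact absurd rfl hl
  · rfl

theorem isHomogeneous_ofBinary (ω : L → L → V) : IsHomogeneous 2 (ofBinary ω) := by
  rintro (_ | ⟨a, _ | ⟨b, _ | ⟨c, l⟩⟩⟩) hl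
  · rfl
  · rfl
  · exact absurd rfl hl
  · rfl

theorem isSkew_ofUnary (φ : L → V) : IsSkew (ofUnary φ) := by
  intro u a b v
  have eq_zero (x y : L) : ofUnary φ (u ++ x :: y :: v) = 0 :=
    isHomogeneous_ofUnary φ _ (by simp only [List.length_append, List.length_cons]; omega)
  rw [eq_zero, eq_zero, neg_zero]

theorem isSkew_ofBinary {ω : L → L → V} (hω : ∀ a b, ω a b = -ω b a) : IsSkew (ofBinary ω) := by
  rintro (_ | ⟨c, u⟩) a b v
  · cases v with
    | nil => exact hω a b
    | cons c v => exact neg_zero.symm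
  · have eq_zero (x y : L) : ofBinary ω (c :: u ++ x :: y :: v) = 0 :=
      isHomogeneous_ofBinary ω _ (by simp only [List.length_append, List.length_cons]; omega)
    rw [eq_zero, eq_zero, neg_zero]

theorem IsHomogeneous.ext_pair {f g : Cochain L V} (hf : IsHomogeneous 2 f)
    (hg : IsHomogeneous 2 g) (h : ∀ a b, f [a, b] = g [a, b]) : f = g := by
  refine hf.ext hg fun l hl => ?_
  obtain ⟨a, b, rfl⟩ := List.length_eq_two.1 hl
  exact h a b

theorem ofUnary_mul_ofUnary (φ ψ : L → B) :
    ofUnary φ * ofUnary ψ = ofBinary fun a b => φ a * ψ b - φ b * ψ a := by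
  refine ((isHomogeneous_ofUnary φ).mul (isHomogeneous_ofUnary ψ)).ext_pair
    (isHomogeneous_ofBinary _) fun a b => ?_
  simp only [mul_cons, mul_nil, contract_apply, parity_apply, ofUnary, ofBinary, List.length_cons,
    List.length_nil, zero_add, mul_zero, pow_zero, pow_one, one_smul, neg_smul, neg_mul]
  abel

variable [LieRing L] [CommRing k] [Module k V] (δ : L → Module.End k V)

theorem d_ofUnary (φ : L → V) :
    d δ (ofUnary φ) = ofBinary fun a b => δ a (φ b) - δ b (φ a) - φ ⁅a, b⁆ := by
  refine (isHomogeneous_ofUnary φ).d δ |>.ext_pair (isHomogeneous_ofBinary _) fun a b => ?_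
  simp only [d_cons, d_nil, lieDeriv_cons, lieDeriv_nil, contract_apply, ofUnary, ofBinary]
  abel

theorem d_ofBinary_apply (ω : L → L → V) (a b c : L) :
    d δ (ofBinary ω) [a, b, c] = δ a (ω b c) - δ b (ω a c) + δ c (ω a b) -
      ω ⁅a, b⁆ c - ω b ⁅a, c⁆ + ω a ⁅b, c⁆ := by
  simp only [d_cons, d_nil, lieDeriv_cons, lieDeriv_nil, contract_apply, ofBinary]
  abel

end LowDegree

/-! ### Comparison with alternating multilinear forms -/

section AltSum

variable [AddCommGroup V] [CommRing k] [Module k V] [AddCommGroup W] [Module k W]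

/-- The alternating sum over deletions `∑ i, (-1) ^ i • Ω aᵢ (a₀, …, âᵢ, …, aₙ)`, which passes
from a family of cochains indexed by the deleted argument to a value on `[a₀, …, aₙ]`. -/
def altSum : List L → (L → Cochain L V) →+ V
  | [] => 0
  | a :: l => AddMonoidHom.mk' (fun Ω => Ω a l) (fun _ _ => rfl) -
      (altSum l).comp ((contract a).compLeft L)

theorem altSum_nil (Ω : L → Cochain L V) : altSum [] Ω = 0 := rfl

theorem altSum_cons (a : L) (l : List L) (Ω : L → Cochain L V) :
    altSum (a :: l) Ω = Ω a l - altSum l (fun b => contract a (Ω b)) := rfl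

theorem altSum_congr {l : List L} {Ω Ω' : L → Cochain L V}
    (h : ∀ b l', l'.length + 1 = l.length → Ω b l' = Ω' b l') : altSum l Ω = altSum l Ω' := by
  induction l generalizing Ω Ω' with
  | nil => rfl
  | cons a l ih =>
    have tail : altSum l (fun b => contract a (Ω b)) = altSum l (fun b => contract a (Ω' b)) :=
      ih fun b l' hl' => h b (a :: l') (congrArg (· + 1) hl')
    rw [altSum_cons, altSum_cons, h a l rfl, tail]

theorem altSum_zero (l : List L) : altSum l (fun _ => (0 : Cochain L V)) = 0 :=
  map_zero (altSum l)

theorem altSum_neg (l : List L) (Ω : L → Cochain L V) :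
    altSum l (fun b => -Ω b) = -altSum l Ω := map_neg (altSum l) Ω

theorem altSum_add (l : List L) (Ω Ω' : L → Cochain L V) :
    altSum l (fun b => Ω b + Ω' b) = altSum l Ω + altSum l Ω' := map_add (altSum l) Ω Ω'

theorem altSum_nsmul (l : List L) (n : ℕ) (Ω : L → Cochain L V) :
    altSum l (fun b => n • Ω b) = n • altSum l Ω := map_nsmul (altSum l) n Ω

theorem altSum_contract {f : Cochain L V} (hf : IsSkew f) (l : List L) :
    altSum l (fun b => contract b f) = l.length • f l := by
  induction l generalizing f with
  | nil => rw [altSum_nil, List.length_nil, zero_smul]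
  | cons a l ih =>
    simp only [altSum_cons, hf.contract_contract a]
    rw [altSum_neg, ih (hf.contract a), sub_neg_eq_add, List.length_cons, succ_nsmul']
    rfl

theorem altSum_contract_mul [Ring B] {m : ℕ} {f : Cochain L B} (hf : IsSkew f)
    (hm : IsHomogeneous m f) (g : Cochain L B) (l : List L) :
    altSum l (fun b => contract b f * g) = m • (f * g) l := by
  induction l generalizing m f g with
  | nil =>
    cases m with
    | zero => rw [altSum_nil, zero_smul]
    | succ m => rw [altSum_nil, mul_nil, hm [] m.succ_ne_zero.symm, zero_mul, smul_zero]
  | cons a l ih =>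
    have first : altSum l (fun b => contract a (contract b f) * g) =
        -altSum l (fun b => contract b (contract a f) * g) := by
      rw [← altSum_neg]
      simp only [hf.contract_contract a, neg_mul]
    have second : altSum l (fun b => parity (contract b f) * contract a g) =
        -altSum l (fun b => contract b (parity f) * contract a g) := by
      rw [← altSum_neg]
      simp only [contract_parity, neg_mul, neg_neg]
    simp only [altSum_cons, contract_mul]
    rw [altSum_add, first, second, ih hf.parity hm.parity, mul_cons]
    cases m with
    | zero =>
      simp only [hm.contract_eq_zero, map_zero, zero_mul, altSum_zero, zero_apply, zero_smul,
        neg_zero, add_zero, sub_zero]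
    | succ m =>
      rw [ih (hf.contract a) (hm.contract a)]
      simp only [succ_nsmul, smul_add]
      abel

/-- The unnormalised antisymmetrisation in the first `n` arguments. -/
def antisymm : ℕ → Cochain L V → Cochain L V
  | 0, f => f
  | n + 1, f => fun l => altSum l (fun b => antisymm n (contract b f))

theorem antisymm_succ (n : ℕ) (f : Cochain L V) (l : List L) :
    antisymm (n + 1) f l = altSum l (fun b => antisymm n (contract b f)) := rfl

theorem IsSkew.antisymm_apply {f : Cochain L V} (hf : IsSkew f) (l : List L) :
    antisymm l.length f l = l.length.factorial • f l := by
  generalize hn : l.length = n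
  induction n generalizing f l with
  | zero => exact (one_nsmul _).symm
  | succ n ih =>
    have antisymm_contract : altSum l (fun b => antisymm n (Cochain.contract b f)) =
        altSum l (fun b => n.factorial • Cochain.contract b f) :=
      altSum_congr fun b l' hl' => ih (hf.contract b) l' (by omega)
    rw [antisymm_succ, antisymm_contract, altSum_nsmul, altSum_contract hf, hn, smul_smul,
      Nat.factorial_succ, mul_comm]

theorem altSum_mapValues (T : V →ₗ[k] W) (l : List L) (Ω : L → Cochain L V) :
    altSum l (fun b => mapValues T (Ω b)) = T (altSum l Ω) := by
  induction l generalizing Ω with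
  | nil => exact (map_zero T).symm
  | cons a l ih =>
    rw [altSum_cons, altSum_cons, map_sub, ← ih]
    rfl

theorem antisymm_mapValues (T : V →ₗ[k] W) (n : ℕ) (f : Cochain L V) :
    antisymm n (mapValues T f) = mapValues T (antisymm n f) := by
  induction n generalizing f with
  | zero => rfl
  | succ n ih =>
    ext l
    rw [antisymm_succ, mapValues_apply, antisymm_succ, ← altSum_mapValues]
    exact altSum_congr fun b l' _ => congrFun (ih (contract b f)) l'

section Concat

variable [Ring B]

/-- The concatenation product, splitting the arguments after the first `m`. -/
def concat (m : ℕ) (f g : Cochain L B) : Cochain L B := fun l => f (l.take m) * g (l.drop m)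

theorem contract_concat (m : ℕ) (a : L) (f g : Cochain L B) :
    contract a (concat (m + 1) f g) = concat m (contract a f) g := rfl

theorem IsHomogeneous.mul_apply_of_zero {f : Cochain L B} (hf : IsHomogeneous 0 f)
    (g : Cochain L B) (l : List L) : (f * g) l = f [] * g l := by
  induction l generalizing f g with
  | nil => rfl
  | cons a l ih =>
    rw [mul_cons, hf.contract_eq_zero, zero_mul, zero_apply, zero_add, ih hf.parity,
      contract_apply, parity_apply, List.length_nil, pow_zero, one_smul]

theorem antisymm_concat {m n : ℕ} {f g : Cochain L B} (hf : IsSkew f) (hm : IsHomogeneous m f)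
    (hg : IsSkew g) {l : List L} (hl : l.length = m + n) :
    antisymm (m + n) (concat m f g) l = (m.factorial * n.factorial) • (f * g) l := by
  induction m generalizing f l with
  | zero =>
    have split : concat 0 f g = mapValues (LinearMap.mulLeft ℤ (f [])) g := rfl
    rw [zero_add] at hl ⊢
    rw [split, antisymm_mapValues, mapValues_apply, ← hl, hg.antisymm_apply,
      hm.mul_apply_of_zero, Nat.factorial_zero, one_mul, map_nsmul, LinearMap.mulLeft_apply]
  | succ m ih =>
    have antisymm_contract_concat :
        altSum l (fun b => antisymm (m + n) (contract b (concat (m + 1) f g))) =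
          altSum l (fun b => (m.factorial * n.factorial) • (contract b f * g)) :=
      altSum_congr fun b l' hl' => by
        rw [contract_concat]
        exact ih (hf.contract b) (hm.contract b) (by omega)
    rw [Nat.add_right_comm, antisymm_succ, antisymm_contract_concat, altSum_nsmul,
      altSum_contract_mul hf hm, smul_smul, Nat.factorial_succ]
    congr 1
    ring

end Concat

end AltSum

section Tuples

variable [AddCommGroup V]

theorem altSum_ofFn {n : ℕ} (a : Fin (n + 1) → L) (Ω : L → Cochain L V) :
    altSum (List.ofFn a) Ω = ∑ i : Fin (n + 1),
      (-1 : ℤ) ^ (i : ℕ) • Ω (a i) (List.ofFn fun j => a (i.succAbove j)) := by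
  induction n generalizing Ω with
  | zero => simp [altSum_cons, altSum_nil]
  | succ n ih =>
    rw [Fin.sum_univ_succ, List.ofFn_succ (f := a), altSum_cons, ih]
    simp [pow_succ, sub_eq_add_neg, List.ofFn_succ, contract_apply]

theorem antisymm_ofFn {n : ℕ} (a : Fin n → L) (f : Cochain L V) :
    antisymm n f (List.ofFn a) = ∑ τ : Equiv.Perm (Fin n),
      (Equiv.Perm.sign τ : ℤ) • f (List.ofFn fun i => a (τ i)) := by
  induction n generalizing f with
  | zero => simp [antisymm]
  | succ n ih =>
    rw [sum_perm_eq_sum_cycleRange, antisymm_succ, altSum_ofFn]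
    refine Finset.sum_congr rfl fun i _ => ?_
    rw [ih, Finset.smul_sum]
    refine Finset.sum_congr rfl fun σ _ => ?_
    simp [List.ofFn_succ, smul_smul, Fin.sign_cycleRange, contract_apply]

variable [LieRing L]

/-- The sum `∑_{i < j} (-1) ^ (i + j) f ([aᵢ, aⱼ], a₀, …, âᵢ, …, âⱼ, …, aₙ)` on `[a₀, …, aₙ]`. -/
def bracketSum : List L → Cochain L V → V
  | [], _ => 0
  | a :: l, f => -altSum l (fun b => contract ⁅a, b⁆ f) - bracketSum l (contract a f)

theorem bracketSum_ofFn {n : ℕ} (a : Fin (n + 2) → L) {f : Cochain L V} (hf : IsSkew f) :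
    bracketSum (List.ofFn a) f = ∑ i : Fin (n + 2), ∑ j : Fin (n + 2),
      if h : (i : ℕ) < (j : ℕ) then
        (-1 : ℤ) ^ ((i : ℕ) + (j : ℕ)) • f (List.ofFn (Fin.cons ⁅a i, a j⁆
          (fun k : Fin n => a (j.succAbove
            ((⟨(i : ℕ), by have := j.isLt; omega⟩ : Fin (n + 1)).succAbove k))) :
              Fin (n + 1) → L))
      else 0 := by
  induction n generalizing f with
  | zero => simp [bracketSum, altSum_cons, altSum_nil, Fin.sum_univ_succ, contract_apply]
  | succ n ih =>
    rw [Fin.sum_univ_succ, List.ofFn_succ (f := a), bracketSum, sub_eq_add_neg]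
    congr 1
    · rw [Fin.sum_univ_succ, altSum_ofFn]
      simp [pow_succ, List.ofFn_succ, contract_apply]
    · rw [ih _ (hf.contract _), ← Finset.sum_neg_distrib]
      refine Finset.sum_congr rfl fun i _ => ?_
      have not_lt_first : ¬(i.succ : ℕ) < ((0 : Fin (n + 1 + 2)) : ℕ) := Nat.not_lt_zero _
      conv_rhs => rw [Fin.sum_univ_succ, dif_neg not_lt_first, zero_add]
      rw [← Finset.sum_neg_distrib]
      refine Finset.sum_congr rfl fun j _ => ?_
      by_cases hij : (i : ℕ) < j
      · have index_succ : (⟨(i.succ : Fin (n + 1 + 2)), by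
            have := j.isLt
            rw [Fin.val_succ]
            omega⟩ : Fin (n + 1 + 1)) = Fin.succ ⟨(i : ℕ), by have := j.isLt; omega⟩ := rfl
        have swap := hf [] (a 0) ⁅a i.succ, a j.succ⁆
        simp only [List.nil_append] at swap
        rw [dif_pos hij, dif_pos (by simpa using hij), index_succ]
        simp only [List.ofFn_cons, contract_apply, swap]
        simp [List.ofFn_succ, pow_succ, pow_add, -Fin.succ_mk]
      · rw [dif_neg hij, dif_neg (by simpa using hij), neg_zero]

variable [CommRing k] [Module k V] (δ : L → Module.End k V)

theorem IsSkew.lieDeriv_apply {f : Cochain L V} (hf : IsSkew f) (a : L) (l : List L) :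
    Cochain.lieDeriv δ a f l =
      δ a (f l) - altSum l (fun b => Cochain.contract ⁅a, b⁆ f) := by
  induction l generalizing f with
  | nil => rw [lieDeriv_nil, altSum_nil, sub_zero]
  | cons b l ih =>
    simp only [altSum_cons, hf.contract_contract b]
    rw [lieDeriv_cons, ih (hf.contract b), altSum_neg]
    simp only [contract_apply]
    abel

theorem IsSkew.d_apply {f : Cochain L V} (hf : IsSkew f) (l : List L) :
    Cochain.d δ f l = altSum l (fun b => Cochain.mapValues (δ b) f) + bracketSum l f := by
  induction l generalizing f with
  | nil => exact (add_zero _).symm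
  | cons b l ih =>
    rw [d_cons, ih (hf.contract b), hf.lieDeriv_apply, altSum_cons, bracketSum]
    simp only [contract_mapValues, mapValues_apply]
    abel

end Tuples

/-- The `n`-form `ω` is the restriction of the cochain `f` to lists of length `n`. -/
def Represents {n : ℕ} (f : Cochain L V) (ω : (Fin n → L) → V) : Prop :=
  ∀ a, ω a = f (List.ofFn a)

theorem Represents.cast {m n : ℕ} {f : Cochain L V} {ω : (Fin n → L) → V} (h : f.Represents ω)
    (e : n = m) : f.Represents fun a : Fin m → L => ω fun i => a (Fin.cast e i) := by
  subst e
  exact h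

theorem Represents.dGen [LieRing L] [CommRing k] [AddCommGroup V] [Module k V] {n : ℕ}
    {f : Cochain L V} {ω : (Fin n → L) → V} (h : f.Represents ω) (hf : IsSkew f)
    (δ : L → Module.End k V) : (d δ f).Represents (dGen (fun a v => δ a v) ω) := by
  intro a
  cases n with
  | zero =>
    exact (congrArg (δ (a 0)) (h Fin.elim0)).trans (sub_zero _).symm
  | succ n =>
    rw [_root_.dGen, hf.d_apply, altSum_ofFn, bracketSum_ofFn a hf]
    simp only [h _]
    rfl

section EndValued

variable {E : Type*} [AddCommGroup E] [Module ℝ E]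

theorem Represents.wedge {m n : ℕ} {f g : Cochain L (Module.End ℝ E)}
    {ω : (Fin m → L) → Module.End ℝ E} {η : (Fin n → L) → Module.End ℝ E}
    (hω : f.Represents ω) (hη : g.Represents η) (hf : IsSkew f) (hm : IsHomogeneous m f)
    (hg : IsSkew g) : (f * g).Represents (wedge ω η) := by
  intro a
  have integrand (τ : Equiv.Perm (Fin (m + n))) :
      ω (fun i => a (τ (Fin.castAdd n i))) * η (fun j => a (τ (Fin.natAdd m j))) =
        concat m f g (List.ofFn fun i => a (τ i)) := by
    rw [hω, hη, List.ofFn_add, concat, List.take_left' List.length_ofFn,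
      List.drop_left' List.length_ofFn]
    rfl
  simp only [_root_.wedge, integrand]
  rw [← antisymm_ofFn, antisymm_concat hf hm hg List.length_ofFn, ← Nat.cast_smul_eq_nsmul ℝ,
    smul_smul, Nat.cast_mul, inv_mul_cancel₀ (by positivity), one_smul]

theorem Represents.wpow {f : Cochain L (Module.End ℝ E)} {R : (Fin 2 → L) → Module.End ℝ E}
    (hR : f.Represents R) (hf : IsSkew f) (h2 : IsHomogeneous 2 f) (p : ℕ) :
    (f ^ p).Represents (wpow R p) := by
  induction p with
  | zero => exact fun _ => rfl
  | succ p ih =>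
    rw [pow_succ']
    exact (hR.wedge ih hf h2 (hf.pow p)).cast (by omega)

end EndValued

end Cochain

/-! ### Polynomial families and their integrals -/

section PolynomialFamilies

variable {V W A : Type*} [AddCommGroup V] [Module ℝ V] [AddCommGroup W] [Module ℝ W]
  [Ring A] [Algebra ℝ A]

/-- `F` is a polynomial family of vectors, `f` its formal derivative. No topology on the space of
values is involved. -/
inductive HasPolyDeriv : (ℝ → V) → (ℝ → V) → Prop
  | const (v : V) : HasPolyDeriv (fun _ => v) (fun _ => 0)
  | monomial (n : ℕ) (v : V) :
      HasPolyDeriv (fun t => t ^ (n + 1) • v) (fun t => ((n + 1 : ℝ) * t ^ n) • v)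
  | add {F f G g : ℝ → V} : HasPolyDeriv F f → HasPolyDeriv G g →
      HasPolyDeriv (fun t => F t + G t) (fun t => f t + g t)

namespace HasPolyDeriv

theorem congr {F f G g : ℝ → V} (h : HasPolyDeriv F f) (hF : ∀ t, G t = F t)
    (hf : ∀ t, g t = f t) : HasPolyDeriv G g := by
  rwa [funext hF, funext hf]

theorem map {F f : ℝ → V} (h : HasPolyDeriv F f) (φ : V →ₗ[ℝ] W) :
    HasPolyDeriv (fun t => φ (F t)) (fun t => φ (f t)) := by
  induction h with
  | const v => exact (const (φ v)).congr (fun _ => rfl) fun _ => map_zero φ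
  | monomial n v => exact (monomial n (φ v)).congr (fun _ => map_smul φ _ v) fun _ => map_smul φ _ v
  | add _ _ ihF ihG => exact (ihF.add ihG).congr (fun _ => map_add φ _ _) fun _ => map_add φ _ _

theorem exists_antideriv {F f : ℝ → V} (h : HasPolyDeriv F f) : ∃ G, HasPolyDeriv G F := by
  induction h with
  | const v => exact ⟨_, (monomial 0 v).congr (fun _ => rfl) fun t => by simp⟩
  | monomial n v =>
    have hn : (n : ℝ) + 1 + 1 ≠ 0 := by positivity
    refine ⟨_, (monomial (n + 1) ((n + 1 + 1 : ℝ)⁻¹ • v)).congr (fun _ => rfl) fun t => ?_⟩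
    rw [smul_smul, Nat.cast_succ, mul_right_comm, mul_inv_cancel₀ hn, one_mul]
  | add _ _ ihF ihG =>
    obtain ⟨F', hF'⟩ := ihF
    obtain ⟨G', hG'⟩ := ihG
    exact ⟨_, hF'.add hG'⟩

theorem mul {F f G g : ℝ → A} (hF : HasPolyDeriv F f) (hG : HasPolyDeriv G g) :
    HasPolyDeriv (fun t => F t * G t) (fun t => f t * G t + F t * g t) := by
  induction hF with
  | const v =>
    exact (hG.map (LinearMap.mulLeft ℝ v)).congr (fun _ => rfl) fun t => by simp
  | add _ _ ih₁ ih₂ =>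
    exact (ih₁.add ih₂).congr (fun t => add_mul _ _ _) fun t => by simp only [add_mul]; abel
  | monomial m v =>
    induction hG with
    | const w => exact (monomial m (v * w)).congr (fun t => by simp) fun t => by simp
    | add _ _ ih₁ ih₂ =>
      exact (ih₁.add ih₂).congr (fun t => mul_add _ _ _) fun t => by simp only [mul_add]; abel
    | monomial n w =>
      refine (monomial (m + n + 1) (v * w)).congr (fun t => ?_) fun t => ?_
      · rw [smul_mul_smul_comm]
        congr 1
        ring
      · rw [smul_mul_smul_comm, smul_mul_smul_comm, ← add_smul]
        congr 1
        push_cast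
        ring

theorem pow_succ {F f : ℝ → A} (h : HasPolyDeriv F f) (n : ℕ) :
    HasPolyDeriv (fun t => F t ^ (n + 1))
      (fun t => ∑ i ∈ Finset.range (n + 1), F t ^ i * f t * F t ^ (n - i)) := by
  induction n with
  | zero => exact h.congr (fun t => by simp) fun t => by simp
  | succ n ih =>
    refine (h.mul ih).congr (fun t => _root_.pow_succ' _ _) fun t => ?_
    rw [Finset.sum_range_succ', Finset.mul_sum, add_comm]
    simp only [_root_.pow_succ', mul_assoc, Nat.add_sub_add_right, pow_zero, one_mul, Nat.sub_zero]

theorem exists_pow_deriv {F f : ℝ → A} (h : HasPolyDeriv F f) (n : ℕ) :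
    ∃ g, HasPolyDeriv (fun t => F t ^ n) g := by
  cases n with
  | zero => exact ⟨_, (const 1).congr (fun t => pow_zero _) fun _ => rfl⟩
  | succ n => exact ⟨_, h.pow_succ n⟩

end HasPolyDeriv

end PolynomialFamilies

section Integral

variable {C : Type*} [CommRing C]

theorem polynomial_eq_zero_of_eval_algebraMap_eq_zero {k : Type*} [Field k] [Infinite k]
    [Algebra k C] {P : Polynomial C} (h : ∀ t : k, P.eval (algebraMap k C t) = 0) : P = 0 := by
  let points (i : Fin (P.natDegree + 1)) : k := Infinite.natEmbedding k i
  have points_injective : Function.Injective points :=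
    (Infinite.natEmbedding k).injective.comp Fin.val_injective
  have dual_coeff_eq_zero (φ : Module.Dual k C) :
      (fun i : Fin (P.natDegree + 1) => φ (P.coeff i)) = 0 := by
    refine Matrix.eq_zero_of_forall_index_sum_pow_mul_eq_zero points_injective fun j => ?_
    have dual_eval := congrArg φ (h (points j))
    rw [Polynomial.eval_eq_sum_range, map_sum, map_zero, Finset.sum_range] at dual_eval
    rw [← dual_eval]
    refine Finset.sum_congr rfl fun i _ => ?_
    rw [← map_pow (algebraMap k C), mul_comm (P.coeff _), ← Algebra.smul_def, map_smul, smul_eq_mul]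
  ext j
  rw [Polynomial.coeff_zero]
  rcases lt_or_ge P.natDegree j with hj | hj
  · exact Polynomial.coeff_eq_zero_of_natDegree_lt hj
  · exact (Module.forall_dual_apply_eq_zero_iff k _).1 fun φ =>
      congrFun (dual_coeff_eq_zero φ) ⟨j, Nat.lt_succ_of_le hj⟩

variable [Algebra ℝ C]

theorem HasPolyDeriv.exists_polynomial {F f : ℝ → C} (h : HasPolyDeriv F f) :
    ∃ P : Polynomial C, (∀ t, F t = P.eval (algebraMap ℝ C t)) ∧
      ∀ t, f t = P.derivative.eval (algebraMap ℝ C t) := by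
  induction h with
  | const v => exact ⟨Polynomial.C v, fun t => by simp, fun t => by simp⟩
  | monomial n v =>
    refine ⟨Polynomial.monomial (n + 1) v, fun t => ?_, fun t => ?_⟩
    · simp [Algebra.smul_def, mul_comm]
    · simp [Algebra.smul_def, mul_comm, mul_assoc]
  | add _ _ ihF ihG =>
    obtain ⟨P, hP, hP'⟩ := ihF
    obtain ⟨Q, hQ, hQ'⟩ := ihG
    exact ⟨P + Q, fun t => by simp [hP, hQ], fun t => by simp [hP', hQ']⟩

theorem sum_div_smul_coeff_derivative (s : ℝ) (P : Polynomial C) :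
    ∑ j ∈ Finset.range (P.derivative.natDegree + 1),
      (s ^ (j + 1) / ((j : ℝ) + 1)) • P.derivative.coeff j =
        P.eval (algebraMap ℝ C s) - P.eval 0 := by
  have term (j : ℕ) : (s ^ (j + 1) / ((j : ℝ) + 1)) • P.derivative.coeff j =
      P.coeff (j + 1) * algebraMap ℝ C s ^ (j + 1) := by
    have hj : (j : ℝ) + 1 ≠ 0 := by positivity
    have cast_succ : (j : C) + 1 = algebraMap ℝ C (j + 1) := by simp
    rw [Polynomial.coeff_derivative, cast_succ, mul_comm, ← Algebra.smul_def, smul_smul,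
      div_mul_cancel₀ _ hj, Algebra.smul_def, map_pow, mul_comm]
  have degree_bound : P.natDegree < P.derivative.natDegree + 1 + 1 := by
    have : IsAddTorsionFree C := .of_isTorsionFree ℝ C
    rw [Polynomial.natDegree_derivative]
    omega
  simp only [term]
  rw [Polynomial.eval_eq_sum_range' degree_bound, Finset.sum_range_succ' _ (_ + 1), pow_zero,
    mul_one, Polynomial.coeff_zero_eq_eval_zero, add_sub_cancel_right]

theorem HasPolyDeriv.intPolyTo_eq {F f : ℝ → C} (h : HasPolyDeriv F f) (s : ℝ) :
    intPolyTo s f = F s - F 0 := by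
  obtain ⟨P, hP, hP'⟩ := h.exists_polynomial
  have exists_poly : ∃ Q : Polynomial C, ∀ t : ℝ, f t = Q.eval (algebraMap ℝ C t) := ⟨_, hP'⟩
  have choose_eq : exists_poly.choose = P.derivative := by
    refine sub_eq_zero.1 (polynomial_eq_zero_of_eval_algebraMap_eq_zero (k := ℝ) fun t => ?_)
    rw [Polynomial.eval_sub, ← hP', ← exists_poly.choose_spec, sub_self]
  rw [intPolyTo, dif_pos exists_poly, choose_eq, sum_div_smul_coeff_derivative, hP, hP, map_zero]

end Integral

namespace Cochain

variable {L C : Type*} [CommRing C] [Algebra ℝ C] {F f : ℝ → Cochain L C}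

/-- The valuewise integral over `[0, 1]` of a polynomial family of cochains. -/
noncomputable def integral (f : ℝ → Cochain L C) : Cochain L C :=
  fun l => intPolyTo 1 fun t => f t l

theorem integral_apply (f : ℝ → Cochain L C) (l : List L) :
    integral f l = intPolyTo 1 fun t => f t l := rfl

theorem integral_eq (h : HasPolyDeriv F f) : integral f = F 1 - F 0 :=
  ext fun l => (h.map (eval ℝ l)).intPolyTo_eq 1

theorem map_integral (h : HasPolyDeriv F f) (Φ : Cochain L C →ₗ[ℝ] Cochain L C) :
    Φ (integral f) = integral fun t => Φ (f t) := by
  rw [integral_eq h, integral_eq (h.map Φ), map_sub]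

theorem IsSkew.integral (h : HasPolyDeriv F f) (hf : ∀ t, IsSkew (f t)) :
    IsSkew (integral f) := by
  intro u a b v
  have swap : (fun t => f t (u ++ a :: b :: v)) = fun t => (-eval ℝ (u ++ b :: a :: v)) (f t) :=
    funext fun t => hf t u a b v
  rw [integral_apply, swap, (h.map (-eval ℝ (u ++ b :: a :: v))).intPolyTo_eq, integral_eq h,
    ← map_sub]
  rfl

end Cochain

/-! ### Derivations of modules and the trace -/

section Leibniz

variable {k C E : Type*} [CommRing k] [CommRing C] [Algebra k C] [AddCommGroup E] [Module k E]
  [Module C E]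

/-- `D` is a derivation of the `C`-module `E` with symbol `δ`, i.e. covariant differentiation along
a vector field with derivation `δ`. -/
def IsLeibniz (δ : Derivation k C C) (D : Module.End k E) : Prop :=
  ∀ (f : C) (e : E), D (f • e) = f • D e + δ f • e

variable {δ : Derivation k C C} {D D' : Module.End k E}

/-- The difference of two derivations of `E` with the same symbol is `C`-linear. -/
def IsLeibniz.sub (h : IsLeibniz δ D) (h' : IsLeibniz δ D') : Module.End C E :=
  { D - D' with
    map_smul' := fun f e => by
      change D (f • e) - D' (f • e) = f • (D e - D' e)
      rw [h, h', smul_sub]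
      abel }

theorem IsLeibniz.sub_apply (h : IsLeibniz δ D) (h' : IsLeibniz δ D') (e : E) :
    h.sub h' e = D e - D' e := rfl

variable [IsScalarTower k C E]

/-- The derivation `φ ↦ D ∘ φ - φ ∘ D` of `End_C(E)` induced by a derivation of `E`. -/
def IsLeibniz.commutator (h : IsLeibniz δ D) : Module.End k (Module.End C E) where
  toFun φ :=
    { toFun := fun e => D (φ e) - φ (D e)
      map_add' := fun x y => by
        simp only [map_add]
        abel
      map_smul' := fun f e => by
        simp only [map_smul, map_add, h f, smul_sub, RingHom.id_apply]
        abel }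
  map_add' φ ψ := by
    ext e
    change D (φ e + ψ e) - (φ (D e) + ψ (D e)) = (D (φ e) - φ (D e)) + (D (ψ e) - ψ (D e))
    rw [map_add]
    abel
  map_smul' c φ := by
    ext e
    change D (c • φ e) - c • φ (D e) = c • (D (φ e) - φ (D e))
    rw [map_smul, smul_sub]

theorem IsLeibniz.commutator_apply (h : IsLeibniz δ D) (φ : Module.End C E) (e : E) :
    h.commutator φ e = D (φ e) - φ (D e) := rfl

theorem IsLeibniz.commutator_mul (h : IsLeibniz δ D) (φ ψ : Module.End C E) :
    h.commutator (φ * ψ) = h.commutator φ * ψ + φ * h.commutator ψ := by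
  ext e
  simp only [commutator_apply, LinearMap.add_apply, Module.End.mul_apply, map_sub]
  abel

theorem IsLeibniz.commutator_eq_add (h : IsLeibniz δ D) (h' : IsLeibniz δ D')
    (φ : Module.End C E) :
    h.commutator φ = h'.commutator φ + (h.sub h' * φ - φ * h.sub h') := by
  ext e
  simp only [commutator_apply, sub_apply, LinearMap.add_apply, LinearMap.sub_apply,
    Module.End.mul_apply, map_sub]
  abel

end Leibniz

section Trace

variable {k C E ι : Type*} [CommRing k] [CommRing C] [Algebra k C] [AddCommGroup E] [Module k E]
  [Module C E] [IsScalarTower k C E]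

/-- Coordinatewise application of `δ`: the flat connection of the basis `b`. -/
noncomputable def coordDeriv (b : Basis ι C E) (δ : Derivation k C C) : Module.End k E :=
  (b.repr.symm.restrictScalars k).toLinearMap ∘ₗ
    Finsupp.mapRange.linearMap δ.toLinearMap ∘ₗ (b.repr.restrictScalars k).toLinearMap

variable (b : Basis ι C E) (δ : Derivation k C C)

theorem repr_coordDeriv (e : E) (i : ι) : b.repr (coordDeriv b δ e) i = δ (b.repr e i) := by
  simp [coordDeriv]

theorem isLeibniz_coordDeriv : IsLeibniz δ (coordDeriv b δ) := fun f e =>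
  b.ext_elem fun i => by
    simp only [repr_coordDeriv, map_add, map_smul, Finsupp.add_apply, Finsupp.smul_apply,
      smul_eq_mul, Derivation.leibniz]
    rw [mul_comm (δ f)]

theorem coordDeriv_basis (i : ι) : coordDeriv b δ (b i) = 0 := by
  refine b.ext_elem fun j => ?_
  classical
  rw [repr_coordDeriv, b.repr_self, Finsupp.single_apply, map_zero, Finsupp.zero_apply]
  split_ifs
  · exact δ.map_one_eq_zero
  · exact map_zero δ

theorem trace_commutator_coordDeriv [Finite ι] (φ : Module.End C E) :
    LinearMap.trace C E ((isLeibniz_coordDeriv b δ).commutator φ) =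
      δ (LinearMap.trace C E φ) := by
  classical
  have := Fintype.ofFinite ι
  simp only [LinearMap.trace_eq_matrix_trace C b, Matrix.trace, Matrix.diag_apply,
    LinearMap.toMatrix_apply, map_sum]
  refine Finset.sum_congr rfl fun i _ => ?_
  rw [IsLeibniz.commutator_apply, coordDeriv_basis, map_zero, sub_zero, repr_coordDeriv]

variable {δ} in
/-- Two derivations of `E` with the same symbol differ by a `C`-linear map, whose commutators are
traceless, so it is enough to treat the flat connection of a basis. -/
theorem IsLeibniz.trace_commutator [Module.Finite C E] [Module.Free C E] {D : Module.End k E}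
    (h : IsLeibniz δ D) (φ : Module.End C E) :
    LinearMap.trace C E (h.commutator φ) = δ (LinearMap.trace C E φ) := by
  let b := Module.Free.chooseBasis C E
  rw [h.commutator_eq_add (isLeibniz_coordDeriv b δ), map_add, map_sub,
    LinearMap.trace_mul_comm C φ, sub_self, add_zero, trace_commutator_coordDeriv]

end Trace

section RestrictScalars

variable (k C E : Type*) [CommRing k] [CommRing C] [Algebra k C] [AddCommGroup E] [Module k E]
  [Module C E] [IsScalarTower k C E]

/-- Restriction of scalars `End_C(E) → End_k(E)` as a homomorphism of algebras. -/
def endRestrictScalars : Module.End C E →ₐ[k] Module.End k E :=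
  AlgHom.ofLinearMap (LinearMap.restrictScalarsₗ k C E E k) rfl fun _ _ => rfl

variable {C E} [Module ℝ E] [Algebra ℝ C] [IsScalarTower ℝ C E]

theorem trR_endRestrictScalars (φ : Module.End C E) :
    trR C (endRestrictScalars ℝ C E φ) = LinearMap.trace C E φ := by
  have is_linear : ∃ g : E →ₗ[C] E, ⇑g = ⇑(endRestrictScalars ℝ C E φ) := ⟨φ, rfl⟩
  rw [trR, dif_pos is_linear]
  exact congrArg _ (DFunLike.coe_injective is_linear.choose_spec)

end RestrictScalars

/-! ### Connections and their curvature -/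

namespace IsConn

open Cochain

variable {L C E : Type*} [LieRing L] [LieAlgebra ℝ L] [CommRing C] [Algebra ℝ C] [AddCommGroup E]
  [Module ℝ E] [Module C E] {ρ : L →ₗ[ℝ] Derivation ℝ C C} {D D0 D1 : L →ₗ[ℝ] Module.End ℝ E}

theorem isLeibniz (h : IsConn ρ D) (a : L) : IsLeibniz (ρ a) (D a) := h a

/-- The difference `λ = ∇¹ - ∇⁰` of two connections, as a cochain of degree one with `C`-linear
values. -/
def difference (h0 : IsConn ρ D0) (h1 : IsConn ρ D1) : Cochain L (Module.End C E) :=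
  ofUnary fun a => (h1.isLeibniz a).sub (h0.isLeibniz a)

theorem isHomogeneous_difference (h0 : IsConn ρ D0) (h1 : IsConn ρ D1) :
    IsHomogeneous 1 (h0.difference h1) :=
  isHomogeneous_ofUnary _

theorem isSkew_difference (h0 : IsConn ρ D0) (h1 : IsConn ρ D1) : IsSkew (h0.difference h1) :=
  isSkew_ofUnary _

theorem curv_smul_s5 (hρ : ∀ (a b : L) (f : C), ρ ⁅a, b⁆ f = ρ a (ρ b f) - ρ b (ρ a f))
    (h : IsConn ρ D) (a b : L) (f : C) (e : E) :
    curv D a b (f • e) = f • curv D a b e := by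
  simp only [curv, LinearMap.sub_apply, Module.End.mul_apply, h _ f, map_add, h _ (ρ _ f), hρ,
    smul_sub, sub_smul]
  abel

variable (hρ : ∀ (a b : L) (f : C), ρ ⁅a, b⁆ f = ρ a (ρ b f) - ρ b (ρ a f))

/-- The curvature of a connection, as a cochain of degree two with `C`-linear values. -/
def curvature (h : IsConn ρ D) : Cochain L (Module.End C E) :=
  ofBinary fun a b => { curv D a b with map_smul' := h.curv_smul_s5 hρ a b }

theorem isHomogeneous_curvature (h : IsConn ρ D) : IsHomogeneous 2 (h.curvature hρ) :=
  isHomogeneous_ofBinary _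

theorem parity_curvature (h : IsConn ρ D) : parity (h.curvature hρ) = h.curvature hρ :=
  (h.isHomogeneous_curvature hρ).parity_eq.trans (by simp)

theorem isSkew_curvature (h : IsConn ρ D) : IsSkew (h.curvature hρ) := by
  refine isSkew_ofBinary fun a b => ?_
  ext e
  change curv D a b e = -curv D b a e
  rw [curv, curv, ← lie_skew b a, map_neg]
  simp only [LinearMap.sub_apply, LinearMap.neg_apply]
  abel

variable [IsScalarTower ℝ C E]

/-- The connection induced on `End_C(E)`. -/
def endAction (h : IsConn ρ D) (a : L) : Module.End ℝ (Module.End C E) :=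
  (h.isLeibniz a).commutator

theorem segment (h0 : IsConn ρ D0) (h1 : IsConn ρ D1) (t : ℝ) :
    IsConn ρ (D0 + t • (D1 - D0)) := by
  intro a f e
  simp only [LinearMap.add_apply, LinearMap.smul_apply, LinearMap.sub_apply, h0 a f, h1 a f,
    smul_add, smul_sub, smul_comm t f]
  abel

theorem endAction_mul (h : IsConn ρ D) (a : L) (φ ψ : Module.End C E) :
    h.endAction a (φ * ψ) = h.endAction a φ * ψ + φ * h.endAction a ψ :=
  (h.isLeibniz a).commutator_mul φ ψ

theorem trace_endAction [Module.Finite C E] [Module.Free C E] (h : IsConn ρ D) (a : L)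
    (φ : Module.End C E) :
    LinearMap.trace C E (h.endAction a φ) = ρ a (LinearMap.trace C E φ) :=
  (h.isLeibniz a).trace_commutator φ

theorem bianchi (h : IsConn ρ D) : d h.endAction (h.curvature hρ) = 0 := by
  refine ((h.isHomogeneous_curvature hρ).d _).ext (fun _ _ => rfl) fun l hl => ?_
  obtain ⟨a, b, c, rfl⟩ := List.length_eq_three.1 hl
  refine (d_ofBinary_apply _ _ a b c).trans ?_
  ext e
  change D a (curv D b c e) - curv D b c (D a e) - (D b (curv D a c e) - curv D a c (D b e)) +
    (D c (curv D a b e) - curv D a b (D c e)) - curv D ⁅a, b⁆ c e - curv D b ⁅a, c⁆ e +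
      curv D a ⁅b, c⁆ e = 0
  simp only [curv, lie_lie a b c, LinearMap.sub_apply, Module.End.mul_apply, map_sub]
  abel

theorem curvature_segment (h0 : IsConn ρ D0) (h1 : IsConn ρ D1) (t : ℝ) :
    (h0.segment h1 t).curvature hρ = h0.curvature hρ + t • d h0.endAction (h0.difference h1) +
      t ^ 2 • (h0.difference h1 * h0.difference h1) := by
  rw [difference, d_ofUnary, ofUnary_mul_ofUnary]
  refine IsHomogeneous.ext_pair (isHomogeneous_ofBinary _) (((isHomogeneous_ofBinary _).add
    ((isHomogeneous_ofBinary _).smul _)).add ((isHomogeneous_ofBinary _).smul _)) fun a b => ?_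
  ext e
  change curv (D0 + t • (D1 - D0)) a b e = curv D0 a b e +
    t • (D0 a (D1 b e - D0 b e) - (D1 b (D0 a e) - D0 b (D0 a e)) -
      (D0 b (D1 a e - D0 a e) - (D1 a (D0 b e) - D0 a (D0 b e))) - (D1 ⁅a, b⁆ e - D0 ⁅a, b⁆ e)) +
    t ^ 2 • ((D1 a (D1 b e - D0 b e) - D0 a (D1 b e - D0 b e)) -
      (D1 b (D1 a e - D0 a e) - D0 b (D1 a e - D0 a e)))
  simp only [curv, LinearMap.add_apply, LinearMap.smul_apply, LinearMap.sub_apply,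
    Module.End.mul_apply, map_sub, map_add, map_smul]
  module

theorem d_difference_segment (h0 : IsConn ρ D0) (h1 : IsConn ρ D1) (t : ℝ) :
    d (h0.segment h1 t).endAction (h0.difference h1) = d h0.endAction (h0.difference h1) +
      (2 * t) • (h0.difference h1 * h0.difference h1) := by
  rw [difference, d_ofUnary, d_ofUnary, ofUnary_mul_ofUnary]
  refine IsHomogeneous.ext_pair (isHomogeneous_ofBinary _) ((isHomogeneous_ofBinary _).add
    ((isHomogeneous_ofBinary _).smul _)) fun a b => ?_
  ext e
  change (D0 a + t • (D1 a - D0 a)) (D1 b e - D0 b e) -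
        (D1 b ((D0 a + t • (D1 a - D0 a)) e) - D0 b ((D0 a + t • (D1 a - D0 a)) e)) -
      ((D0 b + t • (D1 b - D0 b)) (D1 a e - D0 a e) -
        (D1 a ((D0 b + t • (D1 b - D0 b)) e) - D0 a ((D0 b + t • (D1 b - D0 b)) e))) -
      (D1 ⁅a, b⁆ e - D0 ⁅a, b⁆ e) =
    D0 a (D1 b e - D0 b e) - (D1 b (D0 a e) - D0 b (D0 a e)) -
      (D0 b (D1 a e - D0 a e) - (D1 a (D0 b e) - D0 a (D0 b e))) - (D1 ⁅a, b⁆ e - D0 ⁅a, b⁆ e) +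
    (2 * t) • ((D1 a (D1 b e - D0 b e) - D0 a (D1 b e - D0 b e)) -
      (D1 b (D1 a e - D0 a e) - D0 b (D1 a e - D0 a e)))
  simp only [LinearMap.add_apply, LinearMap.smul_apply, LinearMap.sub_apply, map_sub, map_add,
    map_smul]
  module

theorem hasPolyDeriv_curvature (h0 : IsConn ρ D0) (h1 : IsConn ρ D1) :
    HasPolyDeriv (fun t => (h0.segment h1 t).curvature hρ)
      fun t => d (h0.segment h1 t).endAction (h0.difference h1) := by
  have derivative := ((HasPolyDeriv.const (h0.curvature hρ)).add
    (.monomial 0 (d h0.endAction (h0.difference h1)))).add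
      (.monomial 1 (h0.difference h1 * h0.difference h1))
  refine derivative.congr (fun t => ?_) fun t => ?_
  · rw [h0.curvature_segment, zero_add, pow_one]
  · rw [h0.d_difference_segment]
    simp [one_add_one_eq_two]

/-! ### The Chern–Simons form -/

/-- The valuewise trace `Tr_*` of cochains with values in `End_C(E)`. -/
noncomputable def traceValues : Cochain L (Module.End C E) →ₗ[ℝ] Cochain L C :=
  mapValues ((LinearMap.trace C E).restrictScalars ℝ)

theorem traceValues_d [Module.Finite C E] [Module.Free C E] (h : IsConn ρ D)
    (f : Cochain L (Module.End C E)) :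
    traceValues (d h.endAction f) = d (fun a => (ρ a).toLinearMap) (traceValues f) :=
  mapValues_d h.trace_endAction f

theorem represents_difference (h0 : IsConn ρ D0) (h1 : IsConn ρ D1) :
    (mapValues (endRestrictScalars ℝ C E).toLinearMap (h0.difference h1)).Represents
      fun v : Fin 1 → L => (D1 - D0) (v 0) :=
  fun _ => rfl

theorem represents_wpow_curv2 (h : IsConn ρ D) (p : ℕ) :
    (mapValues (endRestrictScalars ℝ C E).toLinearMap (h.curvature hρ ^ p)).Represents
      (wpow (curv2 D) p) := by
  rw [mapValues_pow]
  exact Represents.wpow (fun _ => rfl) ((h.isSkew_curvature hρ).mapValues _)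
    ((h.isHomogeneous_curvature hρ).mapValues _) p

theorem represents_chp (h : IsConn ρ D) (p : ℕ) :
    (traceValues (h.curvature hρ ^ p)).Represents (chp C D p) := fun a => by
  rw [chp, h.represents_wpow_curv2 hρ p]
  exact trR_endRestrictScalars _

variable (h0 : IsConn ρ D0) (h1 : IsConn ρ D1) (k : ℕ)

/-- The integrand `Tr_*(λ ∧ R_t^k)` of the Chern–Simons form `cs_{k+1}`. -/
noncomputable def transgressionIntegrand (t : ℝ) : Cochain L C :=
  traceValues (h0.difference h1 * (h0.segment h1 t).curvature hρ ^ k)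

/-- The Chern–Simons form `cs_{k+1}` as a cochain. -/
noncomputable def transgression : Cochain L C :=
  ((k + 1 : ℕ) : ℝ) • integral (h0.transgressionIntegrand hρ h1 k)

theorem exists_antideriv_transgressionIntegrand :
    ∃ G, HasPolyDeriv G (h0.transgressionIntegrand hρ h1 k) := by
  obtain ⟨g, hg⟩ := (h0.hasPolyDeriv_curvature hρ h1).exists_pow_deriv k
  exact (((HasPolyDeriv.const (h0.difference h1)).mul hg).map traceValues).exists_antideriv

theorem isSkew_transgression : IsSkew (h0.transgression hρ h1 k) := by
  obtain ⟨G, hG⟩ := h0.exists_antideriv_transgressionIntegrand hρ h1 k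
  exact (IsSkew.integral hG fun t => ((h0.isSkew_difference h1).mul
    (((h0.segment h1 t).isSkew_curvature hρ).pow k)).mapValues _).smul _

theorem represents_csPair :
    (h0.transgression hρ h1 k).Represents (csPair C D0 D1 (k + 1)) := by
  intro a
  refine congrArg (((k + 1 : ℕ) : ℝ) • intPolyTo 1 ·) (funext fun t => ?_)
  have ht := h0.segment h1 t
  have wedge_eq := ((h0.represents_difference h1).wedge (ht.represents_wpow_curv2 hρ k)
    ((h0.isSkew_difference h1).mapValues _) ((h0.isHomogeneous_difference h1).mapValues _)
    (((ht.isSkew_curvature hρ).pow k).mapValues _)).cast (Nat.add_comm 1 (2 * k)) a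
  rw [← mapValues_mul] at wedge_eq
  exact (congrArg (trR C) wedge_eq).trans (trR_endRestrictScalars _)

variable [Module.Finite C E] [Module.Free C E]

theorem hasPolyDeriv_traceValues_curvature_pow :
    HasPolyDeriv (fun t => traceValues ((h0.segment h1 t).curvature hρ ^ (k + 1))) fun t =>
      ((k + 1 : ℕ) : ℝ) •
        d (fun a => (ρ a).toLinearMap) (h0.transgressionIntegrand hρ h1 k t) := by
  refine (((h0.hasPolyDeriv_curvature hρ h1).pow_succ k).map traceValues).congr (fun _ => rfl)
    fun t => ?_
  have ht := h0.segment h1 t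
  rw [transgressionIntegrand, ← ht.traceValues_d, d_mul ht.endAction_mul,
    d_pow_eq_zero ht.endAction_mul (ht.bianchi hρ), mul_zero, add_zero, Nat.cast_smul_eq_nsmul]
  exact (mapValues_sum_pow_mul_pow (LinearMap.trace_mul_comm C) (ht.parity_curvature hρ) _ k).symm

theorem d_transgression :
    d (fun a => (ρ a).toLinearMap) (h0.transgression hρ h1 k) =
      traceValues ((h0.segment h1 1).curvature hρ ^ (k + 1)) -
        traceValues ((h0.segment h1 0).curvature hρ ^ (k + 1)) := by
  obtain ⟨G, hG⟩ := h0.exists_antideriv_transgressionIntegrand hρ h1 k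
  rw [transgression, map_smul, map_integral hG]
  have smul_integral := map_integral (hG.map (d fun a => (ρ a).toLinearMap))
    (LinearMap.lsmul ℝ _ ((k + 1 : ℕ) : ℝ))
  exact smul_integral.trans
    (integral_eq (h0.hasPolyDeriv_traceValues_curvature_pow hρ h1 k))

end IsConn

theorem two_mul_eq_pred_add_two {p : ℕ} (hp : 1 ≤ p) : 2 * p = 2 * (p - 1) + 1 + 1 := by
  omega

theorem stmt5_general {L C E : Type*} [LieRing L] [LieAlgebra ℝ L] [CommRing C] [Algebra ℝ C]
    [AddCommGroup E] [Module ℝ E] [Module C E] [IsScalarTower ℝ C E] [Module.Finite C E]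
    [Module.Free C E] (ρ : L →ₗ[ℝ] Derivation ℝ C C)
    (hρ : ∀ (a b : L) (f : C), ρ ⁅a, b⁆ f = ρ a (ρ b f) - ρ b (ρ a f))
    (D0 D1 : L →ₗ[ℝ] Module.End ℝ E) (h0 : IsConn ρ D0) (h1 : IsConn ρ D1)
    (p : ℕ) (hp : 1 ≤ p) (a : Fin (2 * (p - 1) + 1 + 1) → L) :
    dRho ρ (csPair C D0 D1 p) a =
      chp C D1 p (fun i => a (Fin.cast (two_mul_eq_pred_add_two hp) i)) -
        chp C D0 p (fun i => a (Fin.cast (two_mul_eq_pred_add_two hp) i)) := by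
  obtain ⟨k, rfl⟩ := Nat.exists_eq_add_of_le' hp
  have chern (t : ℝ) := ((h0.segment h1 t).represents_chp hρ (k + 1)) a
  have chern_simons := (h0.represents_csPair hρ h1 k).dGen (h0.isSkew_transgression hρ h1 k)
    (fun a => (ρ a).toLinearMap) a
  rw [h0.d_transgression hρ h1, Cochain.sub_apply, ← chern, ← chern] at chern_simons
  simp only [one_smul, zero_smul, add_zero, add_sub_cancel] at chern_simons
  exact chern_simons

/-- the Chern–Simons transgression formula for a pair of ℝ-linear
connections: `d_ρ(cs_p(∇⁰,∇¹)) = ch_p(∇¹) − ch_p(∇⁰)`. -/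
theorem stmt5 {L : Type*} {C : Type*} {E : Type*}
    [LieRing L] [LieAlgebra ℝ L] [CommRing C] [Algebra ℝ C] [Module C L]
    [AddCommGroup E] [Module ℝ E] [Module C E] [IsScalarTower ℝ C E]
    [Module.Finite C E] [Module.Free C E]
    (ρ : L →ₗ[ℝ] Derivation ℝ C C)
    (hρ : ∀ (a b : L) (f : C), ρ ⁅a, b⁆ f = ρ a (ρ b f) - ρ b (ρ a f))
    (hLeib : ∀ (a b : L) (f : C), ⁅a, f • b⁆ = f • ⁅a, b⁆ + ρ a f • b)
    (D0 D1 : L →ₗ[ℝ] Module.End ℝ E) (h0 : IsConn ρ D0) (h1 : IsConn ρ D1)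
    (p : ℕ) (hp : 1 ≤ p) :
    ∀ a : Fin (2 * (p - 1) + 1 + 1) → L,
      dRho ρ (csPair C D0 D1 p) a
        = chp C D1 p (fun i => a (Fin.cast (by omega) i))
          - chp C D0 p (fun i => a (Fin.cast (by omega) i)) := by
  exact stmt5_general ρ hρ D0 D1 h0 h1 p hp
end
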